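/- arXiv:1902.10839 — 3 statements merged into one kernel-verified Lean document; each statement's English description precedes it below -/
import Mathlib

section
/- Let m, r, h, k be integers with m ≥ 1, 1 ≤ r < m, 0 ≤ h < k, gcd(h,k) = 1; set d := gcd(m,k), m' := m/d, k' := k/d, let ℏ be an integer with ℏ·m'h ≡ −1 (mod k'), and b := (ℏm'h + 1)/k'. Let z be a complex number with Re(z) > 0, τ := (h + iz)/k, λ := ⌈rh/d⌉ and λ* := λ − rh/d. Then rτ/(k'·mτ − m'h) = rd/(mk) − i·rh·d/(mkz), and rτ/(k'·mτ − m'h) + λ·(ℏ·mτ − b)/(k'·mτ − m'h) = rd/(mk) + λ·ℏd/k + i·λ*·d²/(mkz). -/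
open Complex

noncomputable section

/-- `λ_{m,r}(h,k) := ⌈rh/gcd(m,k)⌉` (with the convention `gcd(0,n) = n`). -/
def lamF (m r h k : ℕ) : ℤ := ⌈(r * h : ℚ) / (Nat.gcd m k : ℚ)⌉

/-- `λ*_{m,r}(h,k) := λ_{m,r}(h,k) − rh/gcd(m,k)`. -/
def lamStar (m r h k : ℕ) : ℚ := (lamF m r h k : ℚ) - (r * h : ℚ) / (Nat.gcd m k : ℚ)

/-- With `m ≥ 1`, `1 ≤ r < m`, `0 ≤ h < k`, `gcd(h,k) = 1`,
`d := gcd(m,k)`, `m' := m/d`, `k' := k/d`, `ℏ·m'h ≡ −1 (mod k')`, `b := (ℏm'h+1)/k'`,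
`Re(z) > 0`, `τ := (h+iz)/k`, `λ := ⌈rh/d⌉` and `λ* := λ − rh/d`, one has
`rτ/(k'·mτ − m'h) = rd/(mk) − i·rh·d/(mkz)` and
`rτ/(k'·mτ − m'h) + λ·(ℏ·mτ − b)/(k'·mτ − m'h) = rd/(mk) + λ·ℏd/k + i·λ*·d²/(mkz)`. -/
theorem gamma_star_identities (m r h k : ℕ) (hm : 1 ≤ m) (hr : 1 ≤ r) (hrm : r < m)
    (hhk : h < k) (hcop : Nat.gcd h k = 1) (ℏ b : ℤ)
    (hcong : ℏ * (((m / Nat.gcd m k) * h : ℕ) : ℤ) ≡ -1 [ZMOD ((k / Nat.gcd m k : ℕ) : ℤ)])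
    (hb : b * ((k / Nat.gcd m k : ℕ) : ℤ) = ℏ * (((m / Nat.gcd m k) * h : ℕ) : ℤ) + 1)
    (z : ℂ) (hz : 0 < z.re) :
    ((r : ℂ) * (((h : ℂ) + Complex.I * z) / (k : ℂ))) /
        (((k / Nat.gcd m k : ℕ) : ℂ) * ((m : ℂ) * (((h : ℂ) + Complex.I * z) / (k : ℂ))) -
          ((m / Nat.gcd m k : ℕ) : ℂ) * (h : ℂ)) =
      (r : ℂ) * (Nat.gcd m k : ℂ) / ((m : ℂ) * (k : ℂ)) -
        Complex.I * (r : ℂ) * (h : ℂ) * (Nat.gcd m k : ℂ) / ((m : ℂ) * (k : ℂ) * z) ∧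
    ((r : ℂ) * (((h : ℂ) + Complex.I * z) / (k : ℂ))) /
        (((k / Nat.gcd m k : ℕ) : ℂ) * ((m : ℂ) * (((h : ℂ) + Complex.I * z) / (k : ℂ))) -
          ((m / Nat.gcd m k : ℕ) : ℂ) * (h : ℂ)) +
      (lamF m r h k : ℂ) *
        (((ℏ : ℂ) * ((m : ℂ) * (((h : ℂ) + Complex.I * z) / (k : ℂ))) - (b : ℂ)) /
          (((k / Nat.gcd m k : ℕ) : ℂ) * ((m : ℂ) * (((h : ℂ) + Complex.I * z) / (k : ℂ))) -
            ((m / Nat.gcd m k : ℕ) : ℂ) * (h : ℂ))) =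
      (r : ℂ) * (Nat.gcd m k : ℂ) / ((m : ℂ) * (k : ℂ)) +
        (lamF m r h k : ℂ) * (ℏ : ℂ) * (Nat.gcd m k : ℂ) / (k : ℂ) +
        Complex.I * ((lamStar m r h k : ℚ) : ℂ) * (Nat.gcd m k : ℂ) ^ 2 /
          ((m : ℂ) * (k : ℂ) * z) := by
  have hk0 : (k : ℂ) ≠ 0 := by
    have : k ≠ 0 := by omega
    exact_mod_cast this
  have hm0 : (m : ℂ) ≠ 0 := by
    have : m ≠ 0 := by omega
    exact_mod_cast this
  have hd0 : ((Nat.gcd m k : ℕ) : ℂ) ≠ 0 := by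
    have : Nat.gcd m k ≠ 0 := (Nat.gcd_pos_of_pos_left k hm).ne'
    exact_mod_cast this
  have hz0 : z ≠ 0 := by
    rintro rfl
    simp at hz
  have hbC : (b : ℂ) * ((k / Nat.gcd m k : ℕ) : ℂ)
      = (ℏ : ℂ) * (((m / Nat.gcd m k : ℕ) : ℂ) * (h : ℂ)) + 1 := by
    have hb' := congrArg (fun x : ℤ => (x : ℂ)) hb
    simp only [Int.cast_mul, Int.cast_add, Int.cast_natCast, Int.cast_one, Nat.cast_mul] at hb'
    exact hb'
  have hL : ((lamStar m r h k : ℚ) : ℂ)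
      = (lamF m r h k : ℂ) - (r : ℂ) * (h : ℂ) / ((Nat.gcd m k : ℕ) : ℂ) := by
    unfold lamStar
    push_cast
    rfl
  rw [hL]
  rw [Nat.cast_div (Nat.gcd_dvd_left m k) hd0, Nat.cast_div (Nat.gcd_dvd_right m k) hd0] at *
  generalize ((Nat.gcd m k : ℕ) : ℂ) = d at *
  generalize (lamF m r h k : ℂ) = l at *
  have hden : (k : ℂ) / d * ((m : ℂ) * (((h : ℂ) + Complex.I * z) / (k : ℂ))) - (m : ℂ) / d * (h : ℂ)
      = Complex.I * ((m : ℂ) * z / d) := by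
    field_simp
    ring
  have hb2 : (b : ℂ) = (ℏ : ℂ) * m * h / k + d / k := by
    field_simp at hbC ⊢
    linear_combination hbC
  have hI : Complex.I ≠ 0 := Complex.I_ne_zero
  have h1 : ((r : ℂ) * (((h : ℂ) + Complex.I * z) / (k : ℂ))) / (Complex.I * ((m : ℂ) * z / d))
      = (r : ℂ) * d / ((m : ℂ) * (k : ℂ)) -
        Complex.I * (r : ℂ) * (h : ℂ) * d / ((m : ℂ) * (k : ℂ) * z) := by
    rw [div_eq_iff (by positivity)]
    field_simp
    linear_combination ((r : ℂ) * h) * Complex.I_sq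
  have h2 : ((ℏ : ℂ) * ((m : ℂ) * (((h : ℂ) + Complex.I * z) / (k : ℂ))) - (b : ℂ)) /
      (Complex.I * ((m : ℂ) * z / d)) = (ℏ : ℂ) * d / k + Complex.I * d ^ 2 / (m * k * z) := by
    rw [hb2, div_eq_iff (by positivity)]
    field_simp
    linear_combination (-d) * Complex.I_sq
  rw [hden, h1, h2]
  refine ⟨rfl, ?_⟩
  field_simp
  ring
end
end

section
/- Let m, r, h, k be integers with m ≥ 1, 1 ≤ r < m, 0 ≤ h < k ≠ 0, gcd(h,k) = 1; set d := gcd(m,k), m' := m/d, k' := k/d, let ℏ be an integer with ℏ·m'h ≡ −1 (mod k'). Let z be a complex number with Re(z) > 0 and τ := (h+iz)/k, and set λ := ⌈rh/d⌉, λ* := λ − rh/d, ς̃ := rd/(mk) + λℏd/k + i·λ*·d²/(mkz), τ̃ := ℏd/k + i·d²/(mkz). Then Zh(rτ; mτ) = i·(−1)^λ·e^{−2πi·s(m'h,k')} · exp(πi( rh/k − rd/(mk) + 2rdλ*/(mk) + (ℏd/k)(λ² − λ) )) · exp( (π/(12k))( (2m − 12r + 12r²/m)·z − (2d²/m + (12d²/m)(λ*²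 − λ*))·(1/z) ) ) · Zh(ς̃; τ̃). -/
open Complex Finset

noncomputable section

/-- The sawtooth function `((x)) := x − ⌊x⌋ − 1/2` if `x ∉ ℤ`, and `0` if `x ∈ ℤ`. -/
def saw (x : ℝ) : ℝ := if Int.fract x = 0 then 0 else Int.fract x - 1 / 2

/-- The Dedekind sum `s(d,c) := Σ_{n mod c} ((dn/c))·((n/c))`. -/
def dedekindSum (d c : ℕ) : ℝ :=
  ∑ n ∈ Finset.range c, saw ((d : ℝ) * (n : ℝ) / (c : ℝ)) * saw ((n : ℝ) / (c : ℝ))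

/-- `Zh(ς;τ) := ∏_{k≥0}(1 − ζq^k)(1 − ζ⁻¹q^{k+1})` with `q := e^{2πiτ}`, `ζ := e^{2πiς}`. -/
def Zh (ς τ : ℂ) : ℂ :=
  ∏' k : ℕ, (1 - Complex.exp (2 * (Real.pi : ℂ) * Complex.I * ς) *
      Complex.exp (2 * (Real.pi : ℂ) * Complex.I * τ) ^ k) *
    (1 - (Complex.exp (2 * (Real.pi : ℂ) * Complex.I * ς))⁻¹ *
      Complex.exp (2 * (Real.pi : ℂ) * Complex.I * τ) ^ (k + 1))

open Filter Topology

namespace ZhAux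

/-- finite q-Pochhammer -/
def qp (q : ℂ) (n : ℕ) : ℂ := ∏ j ∈ Finset.range n, (1 - q ^ (j + 1))

/-- reciprocal of the q-Pochhammer extended by zero -/
def qu (q : ℂ) (k : ℤ) : ℂ := if 0 ≤ k then (qp q k.toNat)⁻¹ else 0

lemma one_sub_pow_ne {q : ℂ} (hq : ‖q‖ < 1) (j : ℕ) : 1 - q ^ (j + 1) ≠ 0 := by
  intro h
  have h1 : q ^ (j + 1) = 1 := (sub_eq_zero.mp h).symm
  have h2 : ‖q‖ ^ (j + 1) = 1 := by rw [← norm_pow, h1, norm_one]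
  have h3 : ‖q‖ ^ (j + 1) < 1 := pow_lt_one₀ (norm_nonneg _) hq (by omega)
  linarith

lemma qp_ne {q : ℂ} (hq : ‖q‖ < 1) (n : ℕ) : qp q n ≠ 0 :=
  Finset.prod_ne_zero_iff.mpr fun j _ => one_sub_pow_ne hq j

lemma qp_succ (q : ℂ) (n : ℕ) : qp q (n + 1) = qp q n * (1 - q ^ (n + 1)) := by
  simp [qp, Finset.prod_range_succ]

lemma qu_rec {q : ℂ} (hq : ‖q‖ < 1) (k : ℤ) : qu q (k - 1) = (1 - q ^ k) * qu q k := by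
  rcases lt_trichotomy k 0 with h | h | h
  · simp [qu, show ¬ (1 ≤ k) by omega, show ¬ (0 ≤ k) by omega]
  · subst h; simp [qu]
  · obtain ⟨n, rfl⟩ : ∃ n : ℕ, k = n + 1 := ⟨(k - 1).toNat, by omega⟩
    have h1 : ((n : ℤ) + 1).toNat = n + 1 := by omega
    have h2 : q ^ ((n : ℤ) + 1) = q ^ (n + 1) := by norm_cast
    have h3 := one_sub_pow_ne hq n
    have h4 := qp_ne hq n
    simp only [qu, h1, h2, add_sub_cancel_right, Int.toNat_natCast, qp_succ]
    rw [if_pos (by omega), if_pos (by omega)]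
    field_simp

/-- coefficients of the finite triple product -/
def qA (q : ℂ) (n : ℕ) (k : ℤ) : ℂ := qp q (2 * n) * qu q (n + k) * qu q (n - k)

lemma qA_rec {q : ℂ} (hq : ‖q‖ < 1) (hq0 : q ≠ 0) (n : ℕ) (k : ℤ) :
    qA q (n + 1) k = (1 + q ^ (2 * n + 1)) * qA q n k
      + q ^ ((n : ℤ) + 1 - k) * qA q n (k - 1) + q ^ ((n : ℤ) + 1 + k) * qA q n (k + 1) := by
  have e1 : qu q (n + k) = (1 - q ^ ((n : ℤ) + 1 + k)) * qu q (n + 1 + k) := by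
    rw [← qu_rec hq]; congr 1; ring
  have e2 : qu q (n - k) = (1 - q ^ ((n : ℤ) + 1 - k)) * qu q (n + 1 - k) := by
    rw [← qu_rec hq]; congr 1; ring
  have e3 : qu q (n + (k - 1)) = (1 - q ^ ((n : ℤ) + 1 + k) / q) * qu q (n + k) := by
    rw [div_eq_mul_inv, ← zpow_sub_one₀ hq0, show (n : ℤ) + 1 + k - 1 = n + k by ring, ← qu_rec hq]; congr 1; ring
  have e4 : qu q (n - (k + 1)) = (1 - q ^ ((n : ℤ) + 1 - k) / q) * qu q (n - k) := by
    rw [div_eq_mul_inv, ← zpow_sub_one₀ hq0, show (n : ℤ) + 1 - k - 1 = n - k by ring, ← qu_rec hq]; congr 1; ring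
  have e5 : q ^ ((n : ℤ) + 1 + k) * q ^ ((n : ℤ) + 1 - k) = q ^ (2 * n + 2) := by
    rw [← zpow_add₀ hq0, ← zpow_natCast]; congr 1; push_cast; ring
  have e6 : q ^ (2 * n + 1) = q ^ ((n : ℤ) + 1 + k) * q ^ ((n : ℤ) + 1 - k) / q := by
    rw [e5]; field_simp; ring
  have e7 : qp q (2 * (n + 1)) = qp q (2 * n) * (1 - q ^ (2 * n + 1)) * (1 - q ^ (2 * n + 2)) := by
    rw [show 2 * (n + 1) = 2 * n + 1 + 1 by ring, qp_succ, qp_succ]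
  unfold qA
  rw [e7, e3, e4, show (n : ℤ) - (k - 1) = n + 1 - k by ring,
    show (n : ℤ) + (k + 1) = n + 1 + k by ring, e1, e2, ← e5, e6]
  push_cast
  generalize q ^ ((n : ℤ) + 1 + k) = X
  generalize q ^ ((n : ℤ) + 1 - k) = Y
  generalize qu q ((n : ℤ) + 1 + k) = U
  generalize qu q ((n : ℤ) + 1 - k) = V
  field_simp
  ring

lemma HasSum.congr_fun' {f g : ℤ → ℂ} {a b : ℂ} (h : HasSum f a) (hf : ∀ k, g k = f k)
    (hb : b = a) : HasSum g b := by
  rw [hb, show g = f from funext hf]; exact h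

lemma hasSum_finite {q x : ℂ} (hq : ‖q‖ < 1) (hq0 : q ≠ 0) (hx : x ≠ 0) (t : ℤ → ℂ) (t0 : t 0 = 1)
    (ht : ∀ k, t (k + 1) = - x * q ^ k * t k) (n : ℕ) :
    HasSum (fun k => qA q n k * t k)
      (∏ j ∈ Finset.range n, (1 - x * q ^ j) * (1 - x⁻¹ * q ^ (j + 1))) := by
  induction n with
  | zero =>
    have := hasSum_single (f := fun k => qA q 0 k * t k) 0 (by
      intro k hk
      rcases lt_or_gt_of_ne hk with h | h
      · simp [qA, qu, show ¬ (0 ≤ k) by omega]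
      · simp [qA, qu, show ¬ (k ≤ 0) by omega])
    convert this using 1
    simp [qA, qu, qp, t0]
  | succ n ih =>
    rw [Finset.prod_range_succ]
    set P := ∏ j ∈ Finset.range n, (1 - x * q ^ j) * (1 - x⁻¹ * q ^ (j + 1)) with hP
    have h1 := (Equiv.subRight (1 : ℤ)).hasSum_iff.mpr ih
    have h2 := (Equiv.addRight (1 : ℤ)).hasSum_iff.mpr ih
    have h := ((ih.mul_left (1 + q ^ (2 * n + 1))).add (h1.mul_left (-x * q ^ n))).add
      (h2.mul_left (-x⁻¹ * q ^ (n + 1)))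
    refine HasSum.congr_fun' (h := h) ?_ ?_
    · intro k
      simp only [Function.comp, Equiv.subRight_apply, Equiv.coe_addRight]
      rw [qA_rec hq hq0, ht k]
      have h3 := ht (k - 1)
      rw [sub_add_cancel, zpow_sub_one₀ hq0] at h3
      rw [h3, show (n : ℤ) + 1 - k = ((n + 1 : ℕ) : ℤ) - k by push_cast; ring,
        show (n : ℤ) + 1 + k = ((n + 1 : ℕ) : ℤ) + k by push_cast; ring, zpow_sub₀ hq0,
        zpow_add₀ hq0, zpow_natCast]
      have : q ^ k ≠ 0 := zpow_ne_zero _ hq0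
      field_simp
      ring
    · field_simp
      ring

lemma qp_tendsto {q : ℂ} (hq : ‖q‖ < 1) :
    Tendsto (qp q) atTop (𝓝 (∏' n : ℕ, (1 - q ^ (n + 1)))) :=
  (ModularForm.multipliable_one_sub_pow hq).hasProd.tendsto_prod_nat

lemma qinf_ne {q : ℂ} (hq : ‖q‖ < 1) : ∏' n : ℕ, (1 - q ^ (n + 1)) ≠ 0 := by
  refine tprod_one_add_ne_zero_of_summable (f := fun n : ℕ ↦ -q ^ (n + 1)) ?_ ?_
  · exact fun i ↦ by simpa [sub_eq_add_neg] using one_sub_pow_ne hq i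
  · simpa using (summable_nat_add_iff 1).mpr (summable_geometric_of_lt_one (norm_nonneg _) hq)

lemma qu_tendsto {q : ℂ} (hq : ‖q‖ < 1) :
    Tendsto (qu q) atTop (𝓝 (∏' n : ℕ, (1 - q ^ (n + 1)))⁻¹) := by
  have h := ((qp_tendsto hq).inv₀ (qinf_ne hq)).comp (tendsto_atTop_atTop.mpr
    (fun b => ⟨b, fun a ha => by omega⟩) : Tendsto Int.toNat atTop atTop)
  refine h.congr' ?_
  filter_upwards [eventually_ge_atTop 0] with k hk
  simp [qu, hk]

lemma qp_bdd {q : ℂ} (hq : ‖q‖ < 1) : ∃ C, ∀ n, ‖qp q n‖ ≤ C := by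
  obtain ⟨C, hC⟩ := (Metric.isBounded_range_of_tendsto _ (qp_tendsto hq)).exists_norm_le
  exact ⟨C, fun n => hC _ ⟨n, rfl⟩⟩

lemma qu_bdd {q : ℂ} (hq : ‖q‖ < 1) : ∃ C, 0 ≤ C ∧ ∀ n, ‖qu q n‖ ≤ C := by
  obtain ⟨C, hC⟩ := (Metric.isBounded_range_of_tendsto _
    ((qp_tendsto hq).inv₀ (qinf_ne hq))).exists_norm_le
  have hC0 : 0 ≤ C := (norm_nonneg _).trans (hC _ ⟨0, rfl⟩)
  refine ⟨C, hC0, fun n => ?_⟩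
  unfold qu
  split_ifs
  · exact hC _ ⟨n.toNat, rfl⟩
  · simpa using hC0

lemma multipliable_Zh {q x : ℂ} (hq : ‖q‖ < 1) :
    Multipliable (fun j : ℕ => (1 - x * q ^ j) * (1 - x⁻¹ * q ^ (j + 1))) := by
  have hs := summable_geometric_of_lt_one (norm_nonneg _) hq
  refine Multipliable.mul ?_ ?_
  · apply multipliable_one_add_of_summable (f := fun n ↦ -(x * q ^ n))
    simpa using hs.mul_left ‖x‖
  · apply multipliable_one_add_of_summable (f := fun n ↦ -(x⁻¹ * q ^ (n + 1)))
    simpa using ((summable_nat_add_iff 1).mpr hs).mul_left ‖x‖⁻¹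

lemma triple {q x : ℂ} (hq : ‖q‖ < 1) (hq0 : q ≠ 0) (hx : x ≠ 0) (t : ℤ → ℂ) (t0 : t 0 = 1)
    (ht : ∀ k, t (k + 1) = - x * q ^ k * t k) (hs : Summable t) :
    (∏' j : ℕ, (1 - x * q ^ j) * (1 - x⁻¹ * q ^ (j + 1))) * ∏' n : ℕ, (1 - q ^ (n + 1))
      = ∑' k, t k := by
  obtain ⟨C, hC⟩ := qp_bdd hq
  obtain ⟨D, hD0, hD⟩ := qu_bdd hq
  set E := ∏' n : ℕ, (1 - q ^ (n + 1)) with hE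
  have hE0 : E ≠ 0 := qinf_ne hq
  have h1 : Tendsto (fun n : ℕ => ∑' k, qA q n k * t k) atTop (𝓝 (∑' k, E⁻¹ * t k)) := by
    refine tendsto_tsum_of_dominated_convergence (bound := fun k => C * D * D * ‖t k‖)
      (hs.norm.mul_left _) ?_ ?_
    · intro k
      refine Tendsto.mul_const _ ?_
      have a1 : Tendsto (fun n : ℕ => qp q (2 * n)) atTop (𝓝 E) :=
        (qp_tendsto hq).comp (tendsto_id.const_mul_atTop' (by norm_num))
      have a2 : Tendsto (fun n : ℕ => qu q (n + k)) atTop (𝓝 E⁻¹) :=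
        (qu_tendsto hq).comp (tendsto_atTop_add_const_right _ k tendsto_natCast_atTop_atTop)
      have a3 : Tendsto (fun n : ℕ => qu q (n - k)) atTop (𝓝 E⁻¹) := by
        simp_rw [sub_eq_add_neg (_ : ℤ)]
        exact (qu_tendsto hq).comp
          (tendsto_atTop_add_const_right _ (-k) tendsto_natCast_atTop_atTop)
      have := (a1.mul a2).mul a3
      rwa [mul_inv_cancel₀ hE0, one_mul] at this
    · refine Eventually.of_forall fun n k => ?_
      rw [norm_mul, qA, norm_mul, norm_mul]
      have := hC (2 * n)
      have := hD (n + k)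
      have := hD (n - k)
      have hC0 : 0 ≤ C := (norm_nonneg _).trans (hC 0)
      gcongr
  have h2 : Tendsto (fun n : ℕ => ∑' k, qA q n k * t k) atTop
      (𝓝 (∏' j : ℕ, (1 - x * q ^ j) * (1 - x⁻¹ * q ^ (j + 1)))) := by
    simp_rw [fun n => (hasSum_finite hq hq0 hx t t0 ht n).tsum_eq]
    exact (multipliable_Zh hq).hasProd.tendsto_prod_nat
  rw [tendsto_nhds_unique h2 h1, tsum_mul_left]
  field_simp

lemma norm_q_lt {τ : ℂ} (hτ : 0 < τ.im) : ‖Complex.exp (2 * (Real.pi : ℂ) * I * τ)‖ < 1 := by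
  simpa using UpperHalfPlane.norm_exp_two_pi_I_lt_one ⟨τ, hτ⟩

lemma Zh_theta (ς : ℂ) {τ : ℂ} (hτ : 0 < τ.im) :
    Zh ς τ * ∏' n : ℕ, (1 - Complex.exp (2 * (Real.pi : ℂ) * I * τ) ^ (n + 1))
      = jacobiTheta₂ (ς + 1 / 2 - τ / 2) τ := by
  unfold Zh jacobiTheta₂
  refine triple (norm_q_lt hτ) (exp_ne_zero _) (exp_ne_zero _) _ ?_ ?_ ?_
  · simp [jacobiTheta₂_term]
  · intro k
    simp only [jacobiTheta₂_term]
    rw [← exp_int_mul]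
    have : -Complex.exp (2 * (Real.pi : ℂ) * I * ς) = Complex.exp (2 * (Real.pi : ℂ) * I * ς + Real.pi * I) := by
      rw [exp_add, exp_pi_mul_I]; ring
    rw [this, ← exp_add, ← exp_add]
    congr 1
    push_cast
    ring
  · exact (summable_jacobiTheta₂_term_iff _ _).mpr hτ

/-- normalised weight-0 theta quotient -/
def T (ς τ : ℂ) : ℂ := Complex.exp (Real.pi * I * (τ / 6 - ς)) * Zh ς τ

lemma T_eta (ς : ℂ) {τ : ℂ} (hτ : 0 < τ.im) :
    T ς τ * ModularForm.eta τ
      = Complex.exp (Real.pi * I * (τ / 4 - ς)) * jacobiTheta₂ (ς + 1 / 2 - τ / 2) τ := by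
  rw [← Zh_theta ς hτ, T, ModularForm.eta]
  simp_rw [ModularForm.eta_q_eq_pow]
  rw [show Real.pi * I * (τ / 4 - ς) = Real.pi * I * (τ / 6 - ς) + 2 * Real.pi * I * τ / (24 : ℝ) by
    push_cast; ring, exp_add, Function.Periodic.qParam]
  ring

lemma T_add_one (ς τ : ℂ) : T ς (τ + 1) = Complex.exp (Real.pi * I / 6) * T ς τ := by
  unfold T Zh
  have : Complex.exp (2 * (Real.pi : ℂ) * I * (τ + 1)) = Complex.exp (2 * (Real.pi : ℂ) * I * τ) := by
    rw [mul_add, exp_add, mul_one, exp_two_pi_mul_I, mul_one]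
  rw [this, ← mul_assoc, ← exp_add]
  congr 2
  ring

lemma T_add_left (ς : ℂ) {τ : ℂ} (hτ : 0 < τ.im) :
    T (ς + τ) τ = -Complex.exp (-Real.pi * I * (2 * ς + τ)) * T ς τ := by
  have he : ModularForm.eta τ ≠ 0 := ModularForm.eta_ne_zero hτ
  apply mul_right_cancel₀ he
  rw [mul_assoc, T_eta _ hτ, T_eta _ hτ, show ς + τ + 1 / 2 - τ / 2 = (ς + 1 / 2 - τ / 2) + τ by ring,
    jacobiTheta₂_add_left', ← mul_assoc, ← mul_assoc]
  congr 1
  have h : ∀ x : ℂ, -Complex.exp x = Complex.exp (x - Real.pi * I) := by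
    intro x; rw [exp_sub, exp_pi_mul_I]; ring
  rw [h, ← exp_add, ← exp_add]
  congr 1
  ring

lemma T_neg (ς : ℂ) {τ : ℂ} (hτ : 0 < τ.im) : T (-ς) τ = - T ς τ := by
  have he : ModularForm.eta τ ≠ 0 := ModularForm.eta_ne_zero hτ
  apply mul_right_cancel₀ he
  rw [neg_mul, T_eta _ hτ, T_eta _ hτ, ← jacobiTheta₂_neg_left,
    show -(-ς + 1 / 2 - τ / 2) = (ς - 1 / 2 - τ / 2) + τ by ring, jacobiTheta₂_add_left',
    ← jacobiTheta₂_add_left (ς - 1 / 2 - τ / 2), show ς - 1 / 2 - τ / 2 + 1 = ς + 1 / 2 - τ / 2 by ring,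
    ← mul_assoc, ← neg_mul, ← exp_add]
  congr 1
  have h : ∀ x : ℂ, -Complex.exp x = Complex.exp (x + Real.pi * I) := by
    intro x; rw [exp_add, exp_pi_mul_I]; ring
  rw [h]
  congr 1
  ring

lemma neg_one_div_im {τ : ℂ} (hτ : 0 < τ.im) : 0 < (-1 / τ).im := by
  rw [neg_div, one_div, neg_im, inv_im, neg_div, neg_neg]
  have : τ ≠ 0 := by rintro rfl; simp at hτ
  have := normSq_pos.mpr this
  positivity

lemma sqrt_rel {τ : ℂ} (hτ : 0 < τ.im) :
    (sqrt I)⁻¹ * sqrt τ = (-I * τ) ^ (1 / 2 : ℂ) := by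
  have h0 : τ ≠ 0 := by rintro rfl; simp at hτ
  rw [sqrt_eq_exp I_ne_zero, sqrt_eq_exp h0, cpow_def_of_ne_zero (by simp [h0]), ← exp_neg, ← exp_add]
  have hl : log (-I * τ) = log (-I) + log τ := by
    rw [log_mul_eq_add_log_iff (by simp) h0, arg_neg_I]
    have h1 : 0 ≤ τ.arg := arg_nonneg_iff.mpr hτ.le
    have h2 := arg_le_pi τ
    have := Real.pi_pos
    constructor <;> linarith
  rw [hl, log_neg_I, log_I]
  congr 1
  ring

lemma T_S (ς : ℂ) {τ : ℂ} (hτ : 0 < τ.im) :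
    T (ς / τ) (-1 / τ) = -I * Complex.exp (Real.pi * I * ς ^ 2 / τ) * T ς τ := by
  have h0 : τ ≠ 0 := by rintro rfl; simp at hτ
  have hτ' := neg_one_div_im hτ
  have he : ModularForm.eta τ ≠ 0 := ModularForm.eta_ne_zero hτ
  have he' : ModularForm.eta (-1 / τ) ≠ 0 := ModularForm.eta_ne_zero hτ'
  have hS : ModularForm.eta (-1 / τ) = (-I * τ) ^ (1 / 2 : ℂ) * ModularForm.eta τ := by
    have := ModularForm.eta_comp_eq_csqrt_I_inv hτ
    rw [← sqrt_rel hτ, mul_assoc]; simpa using this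
  have hc : (-I * τ) ^ (1 / 2 : ℂ) ≠ 0 := by
    intro h; rw [h, zero_mul] at hS; exact he' hS
  have A := T_eta ς hτ
  have B := T_eta (ς / τ) hτ'
  rw [jacobiTheta₂_functional_equation,
    show (ς + 1 / 2 - τ / 2) / τ = ς / τ - 1 / 2 - (-1 / τ) / 2 by field_simp; ring,
    ← jacobiTheta₂_add_left,
    show ς / τ - 1 / 2 - (-1 / τ) / 2 + 1 = ς / τ + 1 / 2 - (-1 / τ) / 2 by ring] at A
  rw [hS] at B
  generalize jacobiTheta₂ (ς / τ + 1 / 2 - (-1 / τ) / 2) (-1 / τ) = J at A B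
  generalize (-I * τ) ^ (1 / 2 : ℂ) = c at *
  have hJ : J = Complex.exp (-(Real.pi * I * (-1 / τ / 4 - ς / τ))) * (T (ς / τ) (-1 / τ) * (c * ModularForm.eta τ)) := by
    rw [B, ← mul_assoc, ← exp_add]; simp
  rw [hJ] at A
  apply mul_right_cancel₀ he
  rw [mul_assoc, A]
  have hI : -I = Complex.exp (-(Real.pi / 2 * I)) := by
    rw [exp_neg, exp_pi_div_two_mul_I, inv_I]
  rw [hI]
  have : Complex.exp (-(Real.pi / 2 * I)) * Complex.exp (Real.pi * I * ς ^ 2 / τ) * Complex.exp (Real.pi * I * (τ / 4 - ς)) *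
      Complex.exp (-Real.pi * I * (ς + 1 / 2 - τ / 2) ^ 2 / τ) * Complex.exp (-(Real.pi * I * (-1 / τ / 4 - ς / τ))) = 1 := by
    rw [← exp_add, ← exp_add, ← exp_add, ← exp_add]
    refine (congrArg _ ?_).trans exp_zero
    field_simp
    ring
  rw [← one_mul (T (ς / τ) (-1 / τ) * _)]
  refine (congrArg (fun u => u * (T (ς / τ) (-1 / τ) * ModularForm.eta τ)) this.symm).trans ?_
  clear this hJ A B
  generalize T (ς / τ) (-1 / τ) = t
  generalize ModularForm.eta τ = e at *
  generalize Complex.exp _ = a1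
  generalize Complex.exp _ = a2
  generalize Complex.exp _ = a3
  generalize Complex.exp _ = a4
  generalize Complex.exp _ = a5
  field_simp

lemma T_add_nat (ς : ℂ) {τ : ℂ} (hτ : 0 < τ.im) (n : ℕ) :
    T (ς + n * τ) τ = (-1) ^ n * Complex.exp (-Real.pi * I * (2 * n * ς + n ^ 2 * τ)) * T ς τ := by
  induction n with
  | zero => simp
  | succ n ih =>
    rw [show ς + ((n + 1 : ℕ) : ℂ) * τ = (ς + n * τ) + τ by push_cast; ring, T_add_left _ hτ, ih,
      show -Real.pi * I * (2 * ((n + 1 : ℕ) : ℂ) * ς + ((n + 1 : ℕ) : ℂ) ^ 2 * τ) =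
        -Real.pi * I * (2 * (ς + n * τ) + τ) + -Real.pi * I * (2 * n * ς + n ^ 2 * τ) by
          push_cast; ring, exp_add]
    ring

lemma T_add_int_right (ς τ : ℂ) (n : ℤ) : T ς (τ + n) = Complex.exp (Real.pi * I / 6 * n) * T ς τ := by
  induction n using Int.induction_on with
  | zero => simp
  | succ n ih =>
    rw [show τ + (((n : ℤ) + 1 : ℤ) : ℂ) = (τ + (n : ℤ)) + 1 by push_cast; ring, T_add_one, ih,
      ← mul_assoc, ← exp_add]
    congr 2; push_cast; ring
  | pred n ih =>
    have h := T_add_one ς (τ + ((-(n : ℤ) - 1 : ℤ) : ℂ))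
    rw [show τ + ((-(n : ℤ) - 1 : ℤ) : ℂ) + 1 = τ + ((-(n : ℤ) : ℤ) : ℂ) by push_cast; ring, ih] at h
    apply mul_left_cancel₀ (exp_ne_zero (Real.pi * I / 6))
    rw [← h, ← mul_assoc, ← exp_add]
    congr 2; push_cast; ring

/-- Dedekind sum with integer first argument -/
def sI (d : ℤ) (c : ℕ) : ℝ :=
  ∑ n ∈ Finset.range c, saw ((d : ℝ) * (n : ℝ) / (c : ℝ)) * saw ((n : ℝ) / (c : ℝ))

lemma saw_add_int (x : ℝ) (n : ℤ) : saw (x + n) = saw x := by simp [saw]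

lemma saw_neg (x : ℝ) : saw (-x) = -saw x := by
  unfold saw
  by_cases h : Int.fract x = 0
  · have : Int.fract (-x) = 0 := by rwa [Int.fract_neg_eq_zero]
    simp [h, this]
  · have : Int.fract (-x) ≠ 0 := by rwa [ne_eq, Int.fract_neg_eq_zero]
    rw [if_neg h, if_neg this, Int.fract_neg h]; ring

lemma sI_neg (d : ℤ) (c : ℕ) : sI (-d) c = - sI d c := by
  unfold sI
  rw [← Finset.sum_neg_distrib]
  refine Finset.sum_congr rfl fun n _ => ?_
  rw [← neg_mul, ← saw_neg]
  congr 2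
  push_cast; ring

lemma sI_add (d j : ℤ) {c : ℕ} (hc : 0 < c) : sI (d + c * j) c = sI d c := by
  unfold sI
  refine Finset.sum_congr rfl fun n _ => ?_
  rw [← saw_add_int ((d : ℝ) * n / c) (j * n)]
  congr 2
  have : (c : ℝ) ≠ 0 := by positivity
  push_cast; field_simp

lemma saw_div (a c : ℕ) (hc : 0 < c) :
    saw ((a : ℝ) / c) = if a % c = 0 then 0 else ((a % c : ℕ) : ℝ) / c - 1 / 2 := by
  have hc' : (c : ℝ) ≠ 0 := by positivity
  have : Int.fract ((a : ℝ) / c) = ((a % c : ℕ) : ℝ) / c := by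
    rw [Int.fract_eq_iff]
    refine ⟨by positivity, ?_, ((a / c : ℕ) : ℤ), ?_⟩
    · rw [div_lt_one (by positivity)]; exact_mod_cast Nat.mod_lt _ hc
    · have := Nat.mod_add_div a c
      have h : ((a % c : ℕ) : ℝ) + c * ((a / c : ℕ) : ℝ) = a := by exact_mod_cast this
      rw [Int.cast_natCast]
      field_simp
      linarith
  simp only [saw, this, div_eq_zero_iff, hc', or_false, Nat.cast_eq_zero]

lemma sum_perm {h k : ℕ} (hk : 0 < k) (hc : Nat.Coprime h k) (F : ℕ → ℝ) :
    ∑ n ∈ Finset.range k, F (h * n % k) = ∑ n ∈ Finset.range k, F n := by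
  have hinj : Set.InjOn (fun n => h * n % k) (Finset.range k : Set ℕ) := by
    intro a ha b hb hab
    simp only [Finset.coe_range, Set.mem_Iio] at ha hb
    have h1 : a ≡ b [MOD k] := Nat.ModEq.cancel_left_of_coprime hc.symm hab
    have := h1
    rwa [Nat.ModEq, Nat.mod_eq_of_lt ha, Nat.mod_eq_of_lt hb] at this
  have himg : (Finset.range k).image (fun n => h * n % k) = Finset.range k := by
    apply Finset.eq_of_subset_of_card_le
    · intro x hx
      simp only [Finset.mem_image, Finset.mem_range] at hx ⊢
      obtain ⟨n, _, rfl⟩ := hx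
      exact Nat.mod_lt _ hk
    · rw [Finset.card_image_of_injOn hinj]
  conv_rhs => rw [← himg, Finset.sum_image hinj]

lemma sum1 (k : ℕ) : ∑ n ∈ Finset.range k, (n : ℝ) = k * (k - 1) / 2 := by
  induction k with
  | zero => simp
  | succ n ih => rw [Finset.sum_range_succ, ih]; push_cast; ring

lemma sum2 (k : ℕ) : ∑ n ∈ Finset.range k, (n : ℝ) ^ 2 = k * (k - 1) * (2 * k - 1) / 6 := by
  induction k with
  | zero => simp
  | succ n ih => rw [Finset.sum_range_succ, ih]; push_cast; ring

lemma r_eq (h k n : ℕ) :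
    ((h * n % k : ℕ) : ℝ) = h * n - k * ((h * n / k : ℕ) : ℝ) := by
  have := Nat.mod_add_div (h * n) k
  have h : ((h * n % k : ℕ) : ℝ) + k * ((h * n / k : ℕ) : ℝ) = h * n := by exact_mod_cast this
  linarith

lemma sI_eq {h k : ℕ} (hk : 0 < k) (hc : Nat.Coprime h k) :
    (k : ℝ) ^ 2 * sI h k = h * (k * (k - 1) * (2 * k - 1) / 6)
      - k * ∑ n ∈ Finset.range k, (n : ℝ) * ((h * n / k : ℕ) : ℝ) - k ^ 2 * (k - 1) / 4 := by
  have hk' : (k : ℝ) ≠ 0 := by positivity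
  have e1 : ∀ n ∈ Finset.range k, saw (((h : ℤ) : ℝ) * (n : ℝ) / (k : ℝ)) * saw ((n : ℝ) / (k : ℝ))
      = ((((h * n % k : ℕ) : ℝ) / k - 1 / 2) * ((n : ℝ) / k - 1 / 2)) - if n = 0 then 1 / 4 else 0 := by
    intro n hn
    rw [Finset.mem_range] at hn
    rcases Nat.eq_zero_or_pos n with rfl | hn0
    · simp [saw]; norm_num
    · have a1 := saw_div (h * n) k hk
      have a2 := saw_div n k hk
      rw [Nat.mod_eq_of_lt hn, if_neg (by omega)] at a2
      rw [if_neg] at a1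
      · push_cast at a1 a2 ⊢
        rw [a1, a2, if_neg (by omega), sub_zero]
      · intro h0
        have := hc.symm.dvd_of_dvd_mul_left (Nat.dvd_of_mod_eq_zero h0)
        exact absurd (Nat.le_of_dvd hn0 this) (by omega)
  have e2 : ∑ n ∈ Finset.range k, (if n = 0 then (1 / 4 : ℝ) else 0) = 1 / 4 := by
    rw [Finset.sum_ite_eq' (Finset.range k) 0 (fun _ => (1 / 4 : ℝ))]; simp [hk]
  have e3 := sum_perm hk hc (fun n => (n : ℝ))
  unfold sI
  rw [Finset.sum_congr rfl e1, Finset.sum_sub_distrib, e2]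
  have e4 : ∑ n ∈ Finset.range k, (((h * n % k : ℕ) : ℝ) / k - 1 / 2) * ((n : ℝ) / k - 1 / 2)
     = ∑ n ∈ Finset.range k, (h / k ^ 2 * (n : ℝ) ^ 2 - 1 / k * ((n : ℝ) * ((h * n / k : ℕ) : ℝ))
        - 1 / (2 * k) * ((h * n % k : ℕ) : ℝ) - 1 / (2 * k) * (n : ℝ) + 1 / 4) := by
    refine Finset.sum_congr rfl fun n _ => ?_
    have := r_eq h k n
    have : ((h * n / k : ℕ) : ℝ) = (h * n - ((h * n % k : ℕ) : ℝ)) / k := by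
      rw [this]; field_simp; ring
    rw [this]
    field_simp
    ring
  rw [e4]
  simp only [Finset.sum_add_distrib, Finset.sum_sub_distrib, ← Finset.mul_sum, e3, sum1, sum2,
    Finset.sum_const, Finset.card_range, nsmul_eq_mul]
  field_simp
  ring

lemma tri (a h : ℕ) (ha : a < h) :
    (a : ℝ) * (a + 1) = 2 * ∑ ν ∈ Finset.range h, (ν : ℝ) * (if ν ≤ a then 1 else 0) := by
  have : ∑ ν ∈ Finset.range h, (ν : ℝ) * (if ν ≤ a then 1 else 0)
      = ∑ ν ∈ Finset.range (a + 1), (ν : ℝ) := by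
    simp only [mul_ite, mul_one, mul_zero]
    rw [← Finset.sum_filter]
    congr 1
    ext x; simp; omega
  rw [this, sum1]; push_cast; ring

lemma count {h k : ℕ} (hh : 0 < h) (hk : 0 < k) (hc : Nat.Coprime h k) {ν : ℕ} (h0 : 0 < ν)
    (h1 : ν < h) :
    ∑ n ∈ Finset.range k, (if ν ≤ h * n / k then (1 : ℝ) else 0) = k - 1 - ((k * ν / h : ℕ) : ℝ) := by
  have hg : k * ν / h < k := by
    rw [Nat.div_lt_iff_lt_mul hh]; exact Nat.mul_lt_mul_of_pos_left h1 hk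
  have e : ∀ n ∈ Finset.range k, (if ν ≤ h * n / k then (1 : ℝ) else 0)
      = 1 - if n ≤ k * ν / h then (1 : ℝ) else 0 := by
    intro n hn
    have a1 : ν ≤ h * n / k ↔ ν * k ≤ h * n := Nat.le_div_iff_mul_le hk
    have a2 : n ≤ k * ν / h ↔ n * h ≤ k * ν := Nat.le_div_iff_mul_le hh
    have a3 : ν * k ≠ h * n := by
      intro h3
      have : h ∣ ν * k := ⟨n, h3⟩
      have := hc.dvd_of_dvd_mul_right this
      exact absurd (Nat.le_of_dvd h0 this) (by omega)
    rw [mul_comm n h] at a2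
    have a4 := mul_comm k ν
    by_cases h5 : ν * k ≤ h * n
    · rw [if_pos (a1.mpr h5), if_neg (fun h6 => by have := a2.mp h6; omega)]; ring
    · rw [if_neg (fun h6 => h5 (a1.mp h6)), if_pos (a2.mpr (by omega))]; ring
  rw [Finset.sum_congr rfl e, Finset.sum_sub_distrib, ← Finset.sum_filter]
  have : (Finset.range k).filter (fun n => n ≤ k * ν / h) = Finset.range (k * ν / h + 1) := by
    ext x; simp; omega
  rw [this]; simp; ring

lemma double_count {h k : ℕ} (hh : 0 < h) (hk : 0 < k) (hc : Nat.Coprime h k) :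
    ∑ n ∈ Finset.range k, ((h * n / k : ℕ) : ℝ) * (((h * n / k : ℕ) : ℝ) + 1)
      = (k - 1) * (h * (h - 1)) - 2 * ∑ ν ∈ Finset.range h, (ν : ℝ) * ((k * ν / h : ℕ) : ℝ) := by
  have e : ∀ n ∈ Finset.range k, ((h * n / k : ℕ) : ℝ) * (((h * n / k : ℕ) : ℝ) + 1)
      = 2 * ∑ ν ∈ Finset.range h, (ν : ℝ) * (if ν ≤ h * n / k then 1 else 0) := by
    intro n hn
    rw [Finset.mem_range] at hn
    apply tri
    rw [Nat.div_lt_iff_lt_mul hk]; exact Nat.mul_lt_mul_of_pos_left hn hh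
  rw [Finset.sum_congr rfl e, ← Finset.mul_sum, Finset.sum_comm]
  have e2 : ∀ ν ∈ Finset.range h, ∑ n ∈ Finset.range k, (ν : ℝ) * (if ν ≤ h * n / k then (1 : ℝ) else 0)
      = (k - 1) * (ν : ℝ) - (ν : ℝ) * ((k * ν / h : ℕ) : ℝ) := by
    intro ν hν
    rw [Finset.mem_range] at hν
    rw [← Finset.mul_sum]
    rcases Nat.eq_zero_or_pos ν with rfl | h0
    · simp
    · rw [count hh hk hc h0 hν]; ring
  rw [Finset.sum_congr rfl e2, Finset.sum_sub_distrib, ← Finset.mul_sum, sum1]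
  ring

lemma reciprocity {h k : ℕ} (hh : 0 < h) (hk : 0 < k) (hc : Nat.Coprime h k) :
    sI h k + sI k h = -1 / 4 + (h / k + k / h + 1 / (h * k)) / 12 := by
  have hh' : (h : ℝ) ≠ 0 := by positivity
  have hk' : (k : ℝ) ≠ 0 := by positivity
  have a1 := sI_eq hk hc
  have a2 := sI_eq hh hc.symm
  have a3 := double_count hh hk hc
  have a4 := sum_perm hk hc (fun n => (n : ℝ))
  have a5 := sum_perm hk hc (fun n => (n : ℝ) ^ 2)
  simp only [r_eq] at a4 a5
  rw [sum2] at a5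
  rw [sum1, Finset.sum_sub_distrib, ← Finset.mul_sum, ← Finset.mul_sum, sum1] at a4
  have e5 : ∑ n ∈ Finset.range k, ((h : ℝ) * n - k * ((h * n / k : ℕ) : ℝ)) ^ 2
     = h ^ 2 * ∑ n ∈ Finset.range k, (n : ℝ) ^ 2
       - 2 * h * k * ∑ n ∈ Finset.range k, (n : ℝ) * ((h * n / k : ℕ) : ℝ)
       + k ^ 2 * ∑ n ∈ Finset.range k, ((h * n / k : ℕ) : ℝ) * (((h * n / k : ℕ) : ℝ) + 1)
       - k ^ 2 * ∑ n ∈ Finset.range k, ((h * n / k : ℕ) : ℝ) := by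
    simp only [Finset.mul_sum]
    rw [← Finset.sum_sub_distrib, ← Finset.sum_add_distrib, ← Finset.sum_sub_distrib]
    refine Finset.sum_congr rfl fun n _ => ?_
    ring
  rw [e5, sum2, a3] at a5
  generalize ∑ n ∈ Finset.range k, (n : ℝ) * ((h * n / k : ℕ) : ℝ) = A at *
  generalize ∑ n ∈ Finset.range k, ((h * n / k : ℕ) : ℝ) = B at *
  generalize ∑ n ∈ Finset.range h, (n : ℝ) * ((k * n / h : ℕ) : ℝ) = C at *
  have b1 : sI h k = (h * (k * (k - 1) * (2 * k - 1) / 6) - k * A - k ^ 2 * (k - 1) / 4) / k ^ 2 := by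
    rw [← a1]; field_simp
  have b2 : sI k h = (k * (h * (h - 1) * (2 * h - 1) / 6) - h * C - h ^ 2 * (h - 1) / 4) / h ^ 2 := by
    rw [← a2]; field_simp
  have b4 : B = (h * (k * (k - 1) / 2) - k * (k - 1) / 2) / k := by
    rw [eq_div_iff hk']; linarith
  subst b4
  have b5 : A = (h ^ 2 * (k * (k - 1) * (2 * k - 1) / 6) + k ^ 2 * ((k - 1) * (h * (h - 1)) - 2 * C)
      - k ^ 2 * ((h * (k * (k - 1) / 2) - k * (k - 1) / 2) / k)
      - k * (k - 1) * (2 * k - 1) / 6) / (2 * h * k) := by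
    rw [eq_div_iff (by positivity)]; linarith
  rw [b1, b2, b5]
  field_simp
  ring

lemma denom_ne {τ : ℂ} (hτ : 0 < τ.im) {c : ℕ} (hc : 0 < c) (d : ℤ) : (c : ℂ) * τ + d ≠ 0 := by
  intro h
  have := congrArg Complex.im h
  simp at this
  rcases this with h | h
  · omega
  · linarith

lemma T_mod_step (c : ℕ) (hc : 0 < c)
    (H : ∀ d : ℕ, d < c → ∀ a b : ℤ, a * d - b * c = 1 → ∀ ς τ : ℂ, 0 < τ.im →
      T (ς / (c * τ + d)) ((a * τ + b) / (c * τ + d)) =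
        -I * Complex.exp (2 * Real.pi * I * ((a + d) / (12 * c) - (sI d c : ℝ))) *
          Complex.exp (Real.pi * I * (c * ς ^ 2 / (c * τ + d))) * T ς τ)
    (a b d : ℤ) (hdet : a * d - b * c = 1) (ς τ : ℂ) (hτ : 0 < τ.im) :
    T (ς / (c * τ + d)) ((a * τ + b) / (c * τ + d)) =
        -I * Complex.exp (2 * Real.pi * I * ((a + d) / (12 * c) - (sI d c : ℝ))) *
          Complex.exp (Real.pi * I * (c * ς ^ 2 / (c * τ + d))) * T ς τ := by
  have hc' : (c : ℂ) ≠ 0 := by exact_mod_cast hc.ne'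
  obtain ⟨d0, j, hd0, rfl⟩ : ∃ (d0 : ℕ) (j : ℤ), d0 < c ∧ d = d0 + c * j := by
    refine ⟨(d % c).toNat, d / c, ?_, ?_⟩
    · have := Int.emod_lt_of_pos d (show (0 : ℤ) < c by exact_mod_cast hc)
      omega
    · have := Int.emod_nonneg d (show (c : ℤ) ≠ 0 by omega)
      rw [Int.toNat_of_nonneg this, Int.emod_add_mul_ediv]
  have h := H d0 hd0 a (b - a * j) (by linarith) ς (τ + j) (by simpa using hτ)
  rw [T_add_int_right] at h
  rw [sI_add _ _ hc]
  have e1 : (c : ℂ) * (τ + j) + d0 = c * τ + ((d0 + c * j : ℤ) : ℂ) := by push_cast; ring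
  have e2 : (a : ℂ) * (τ + j) + ((b - a * j : ℤ) : ℂ) = a * τ + b := by push_cast; ring
  rw [e1, e2] at h
  rw [h]
  have e3 : 2 * Real.pi * I * (((a : ℂ) + ((d0 + c * j : ℤ) : ℂ)) / (12 * c) - (sI d0 c : ℝ))
     = 2 * Real.pi * I * (((a : ℂ) + d0) / (12 * c) - (sI d0 c : ℝ)) + Real.pi * I / 6 * j := by
    push_cast; field_simp; ring
  rw [e3, exp_add]
  ring

lemma T_mod (c : ℕ) : 0 < c → ∀ (a b d : ℤ), a * d - b * c = 1 → ∀ (ς τ : ℂ), 0 < τ.im →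
    T (ς / (c * τ + d)) ((a * τ + b) / (c * τ + d)) =
        -I * Complex.exp (2 * Real.pi * I * ((a + d) / (12 * c) - (sI d c : ℝ))) *
          Complex.exp (Real.pi * I * (c * ς ^ 2 / (c * τ + d))) * T ς τ := by
  induction c using Nat.strong_induction_on with
  | _ c ih =>
  intro hc
  refine T_mod_step c hc ?_
  intro d hd a b hdet ς τ hτ
  have hτ0 : τ ≠ 0 := by rintro rfl; simp at hτ
  rcases Nat.eq_zero_or_pos d with rfl | hd0
  · have hc1 : c = 1 := by
      have h1 : (c : ℤ) ∣ 1 := ⟨-b, by push_cast at hdet; linarith⟩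
      have := Int.le_of_dvd one_pos h1
      omega
    subst hc1
    have hb : b = -1 := by push_cast at hdet; linarith
    subst hb
    have e1 : ((a : ℂ) * τ + ((-1 : ℤ) : ℂ)) / (((1 : ℕ) : ℂ) * τ + ((0 : ℕ) : ℂ)) = -1 / τ + a := by
      rw [Nat.cast_one, Nat.cast_zero, one_mul, add_zero, add_div, mul_div_assoc, div_self hτ0]
      push_cast; ring
    have e2 : (sI ((0 : ℕ) : ℤ) 1 : ℝ) = 0 := by simp [sI, saw]
    rw [e1, T_add_int_right, e2]
    simp only [Nat.cast_one, Nat.cast_zero, one_mul, add_zero, mul_one]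
    rw [T_S _ hτ]
    have e3 : 2 * Real.pi * I * ((a : ℂ) / 12 - ((0 : ℝ) : ℂ)) = Real.pi * I / 6 * a := by
      push_cast; ring
    rw [e3, show Real.pi * I * (ς ^ 2 / τ) = Real.pi * I * ς ^ 2 / τ by ring]
    ring
  · have hden : (c : ℂ) * τ + d ≠ 0 := by simpa using denom_ne hτ hc (d : ℤ)
    have hτ' := neg_one_div_im hτ
    have h := ih d hd hd0 b (-a) (-c) (by linarith) (-(ς / τ)) (-1 / τ) hτ'
    have hd' : (d : ℂ) ≠ 0 := by exact_mod_cast hd0.ne'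
    have hc' : (c : ℂ) ≠ 0 := by exact_mod_cast hc.ne'
    have e0 : (d : ℂ) * (-1 / τ) + ((-c : ℤ) : ℂ) = -((c * τ + d) / τ) := by
      push_cast; field_simp; ring
    have e1 : -(ς / τ) / ((d : ℂ) * (-1 / τ) + ((-c : ℤ) : ℂ)) = ς / (c * τ + d) := by
      rw [e0]; field_simp
    have e2 : ((b : ℂ) * (-1 / τ) + ((-a : ℤ) : ℂ)) / ((d : ℂ) * (-1 / τ) + ((-c : ℤ) : ℂ))
        = (a * τ + b) / (c * τ + d) := by
      rw [e0]; push_cast; field_simp; ring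
    rw [e1, e2, T_neg _ hτ', T_S _ hτ, e0, sI_neg] at h
    rw [h]
    have hcop : Nat.Coprime d c := by
      rw [← Nat.isCoprime_iff_coprime]
      exact ⟨a, -b, by linarith⟩
    have hrec : (sI d c : ℝ) = -1 / 4 + ((d : ℝ) / c + c / d + 1 / (d * c)) / 12 - sI c d := by
      have := reciprocity hd0 hc hcop; linarith
    have hb : (b : ℂ) = (a * d - 1) / c := by
      rw [eq_div_iff hc']
      have : ((a * d - b * c : ℤ) : ℂ) = 1 := by rw [hdet]; simp
      push_cast at this
      linear_combination -this
    have hI : I * -I = 1 := by simp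
    have hmI : -I = Complex.exp (-(Real.pi / 2 * I)) := by
      rw [exp_neg, exp_pi_div_two_mul_I, inv_I]
    have key : ∀ x y w v : ℂ, x + y + w = -(Real.pi / 2 * I) + v →
        -I * Complex.exp x * Complex.exp y * -(-I * Complex.exp w * T ς τ)
          = -I * Complex.exp v * T ς τ := by
      intro x y w v hx
      have : Complex.exp x * Complex.exp y * Complex.exp w = -I * Complex.exp v := by
        rw [hmI, ← exp_add, ← exp_add, ← exp_add, hx]
      rw [← this]
      linear_combination (-Complex.exp x * Complex.exp y * Complex.exp w * T ς τ) * I_sq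
    rw [mul_assoc (-I) (Complex.exp (2 * Real.pi * I * (((a : ℂ) + d) / (12 * c) - _))), ← exp_add]
    apply key
    rw [hrec, hb]
    push_cast
    have hden2 : τ * c + d ≠ 0 := by rwa [mul_comm]
    field_simp
    ring

lemma dedekindSum_eq (d c : ℕ) : dedekindSum d c = sI d c := by
  simp [dedekindSum, sI]

end ZhAux

/-- The transformation formula for `Zh(rτ; mτ)` at the Farey fraction
`h/k`:
`Zh(rτ; mτ) = i·(−1)^λ·e^{−2πi·s(m'h,k')} · exp(πi(rh/k − rd/(mk) + 2rdλ*/(mk) + (ℏd/k)(λ² − λ)))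
  · exp((π/(12k))((2m − 12r + 12r²/m)z − (2d²/m + (12d²/m)(λ*² − λ*))(1/z))) · Zh(ς̃; τ̃)`. -/
theorem Zh_transformation (m r h k : ℕ) (hm : 1 ≤ m) (hr : 1 ≤ r) (hrm : r < m)
    (hhk : h < k) (hcop : Nat.gcd h k = 1) (ℏ : ℤ)
    (hcong : ℏ * (((m / Nat.gcd m k) * h : ℕ) : ℤ) ≡ -1 [ZMOD ((k / Nat.gcd m k : ℕ) : ℤ)])
    (z : ℂ) (hz : 0 < z.re) :
    Zh ((r : ℂ) * (((h : ℂ) + Complex.I * z) / (k : ℂ)))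
        ((m : ℂ) * (((h : ℂ) + Complex.I * z) / (k : ℂ))) =
      Complex.I * (-1 : ℂ) ^ (lamF m r h k) *
        Complex.exp (-2 * (Real.pi : ℂ) * Complex.I *
          (dedekindSum ((m / Nat.gcd m k) * h) (k / Nat.gcd m k) : ℝ)) *
        Complex.exp ((Real.pi : ℂ) * Complex.I *
          ((r : ℂ) * (h : ℂ) / (k : ℂ) -
            (r : ℂ) * (Nat.gcd m k : ℂ) / ((m : ℂ) * (k : ℂ)) +
            2 * (r : ℂ) * (Nat.gcd m k : ℂ) * ((lamStar m r h k : ℚ) : ℂ) /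
              ((m : ℂ) * (k : ℂ)) +
            (ℏ : ℂ) * (Nat.gcd m k : ℂ) / (k : ℂ) *
              ((lamF m r h k : ℂ) ^ 2 - (lamF m r h k : ℂ)))) *
        Complex.exp ((Real.pi : ℂ) / (12 * (k : ℂ)) *
          ((2 * (m : ℂ) - 12 * (r : ℂ) + 12 * (r : ℂ) ^ 2 / (m : ℂ)) * z -
            (2 * (Nat.gcd m k : ℂ) ^ 2 / (m : ℂ) +
              12 * (Nat.gcd m k : ℂ) ^ 2 / (m : ℂ) *
                (((lamStar m r h k : ℚ) : ℂ) ^ 2 - ((lamStar m r h k : ℚ) : ℂ))) *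
              (1 / z))) *
        Zh ((r : ℂ) * (Nat.gcd m k : ℂ) / ((m : ℂ) * (k : ℂ)) +
            (lamF m r h k : ℂ) * (ℏ : ℂ) * (Nat.gcd m k : ℂ) / (k : ℂ) +
            Complex.I * ((lamStar m r h k : ℚ) : ℂ) * (Nat.gcd m k : ℂ) ^ 2 /
              ((m : ℂ) * (k : ℂ) * z))
          ((ℏ : ℂ) * (Nat.gcd m k : ℂ) / (k : ℂ) +
            Complex.I * (Nat.gcd m k : ℂ) ^ 2 / ((m : ℂ) * (k : ℂ) * z)) := by
  have hk0 : 0 < k := by omega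
  set d := Nat.gcd m k with hd
  have hd0 : 0 < d := Nat.gcd_pos_of_pos_right _ hk0
  obtain ⟨m', hm'⟩ : d ∣ m := Nat.gcd_dvd_left m k
  obtain ⟨k', hk'⟩ : d ∣ k := Nat.gcd_dvd_right m k
  have hmd : m / d = m' := by rw [hm']; exact Nat.mul_div_cancel_left _ hd0
  have hkd : k / d = k' := by rw [hk']; exact Nat.mul_div_cancel_left _ hd0
  have hm0' : 0 < m' := by rcases Nat.eq_zero_or_pos m' with h | h; · simp [h] at hm'; omega
                           · exact h
  have hk0' : 0 < k' := by rcases Nat.eq_zero_or_pos k' with h | h; · simp [h] at hk'; omega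
                           · exact h
  rw [hmd, hkd] at hcong
  rw [hmd, hkd]
  have hstar : ((lamStar m r h k : ℚ) : ℂ) = (lamF m r h k : ℂ) - r * h / d := by
    rw [lamStar, ← hd]; push_cast; ring
  have hlam : 0 ≤ lamF m r h k := by
    unfold lamF
    exact Int.ceil_nonneg (by positivity)
  obtain ⟨l, hl⟩ := Int.eq_ofNat_of_zero_le hlam
  rw [hstar, ZhAux.dedekindSum_eq]
  rw [hl]
  clear hstar hlam hl
  clear_value d
  have hmC : (m : ℂ) = d * m' := by rw [hm']; push_cast; ring
  have hkC : (k : ℂ) = d * k' := by rw [hk']; push_cast; ring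
  have hdC : (d : ℂ) ≠ 0 := by exact_mod_cast hd0.ne'
  have hmC0 : (m' : ℂ) ≠ 0 := by exact_mod_cast hm0'.ne'
  have hkC0 : (k' : ℂ) ≠ 0 := by exact_mod_cast hk0'.ne'
  have hz0 : z ≠ 0 := by rintro rfl; simp at hz
  obtain ⟨b, hb⟩ : ∃ b : ℤ, ℏ * (-((m' * h : ℕ) : ℤ)) - b * k' = 1 := by
    obtain ⟨t, ht⟩ := hcong.dvd
    exact ⟨t, by linarith⟩
  have him : 0 < ((m : ℂ) * (((h : ℂ) + Complex.I * z) / (k : ℂ))).im := by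
    have : (m : ℂ) * (((h : ℂ) + Complex.I * z) / (k : ℂ)) = ((m / k : ℝ) : ℂ) * (h + I * z) := by
      push_cast; ring
    rw [this, Complex.im_ofReal_mul]
    have h1 : ((h : ℂ) + I * z).im = z.re := by simp
    rw [h1]
    have : (0 : ℝ) < m := by exact_mod_cast hm
    have : (0 : ℝ) < k := by exact_mod_cast hk0
    positivity
  have him2 : 0 < ((ℏ : ℂ) * (d : ℂ) / (k : ℂ) +
      Complex.I * (d : ℂ) ^ 2 / ((m : ℂ) * (k : ℂ) * z)).im := by
    have : (ℏ : ℂ) * (d : ℂ) / (k : ℂ) + Complex.I * (d : ℂ) ^ 2 / ((m : ℂ) * (k : ℂ) * z)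
        = ((ℏ * d / k : ℝ) : ℂ) + ((d ^ 2 / (m * k) : ℝ) : ℂ) * (I * z⁻¹) := by
      push_cast; rw [div_mul_eq_div_div, div_eq_mul_inv _ z]; ring
    rw [this, Complex.add_im, Complex.ofReal_im, Complex.im_ofReal_mul, zero_add]
    have h1 : (I * z⁻¹).im = z.re / Complex.normSq z := by simp [Complex.inv_re]
    rw [h1]
    have h2 : (0 : ℝ) < m := by exact_mod_cast hm
    have h3 : (0 : ℝ) < k := by exact_mod_cast hk0
    have h4 : (0 : ℝ) < d := by exact_mod_cast hd0
    have h5 := Complex.normSq_pos.mpr hz0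
    positivity
  have hT := ZhAux.T_mod k' hk0' ℏ b (-((m' * h : ℕ) : ℤ)) hb
    ((r : ℂ) * (((h : ℂ) + Complex.I * z) / (k : ℂ))) _ him
  have e0 : (k' : ℂ) * ((m : ℂ) * (((h : ℂ) + Complex.I * z) / (k : ℂ))) +
      ((-((m' * h : ℕ) : ℤ) : ℤ) : ℂ) = I * m' * z := by
    rw [hmC, hkC]; push_cast; field_simp; ring
  have hbC : (b : ℂ) = (-ℏ * (m' * h) - 1) / k' := by
    rw [eq_div_iff hkC0]
    have : ((ℏ * (-((m' * h : ℕ) : ℤ)) - b * k' : ℤ) : ℂ) = 1 := by rw [hb]; simp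
    push_cast at this
    linear_combination -this
  have e1 : ((ℏ : ℂ) * ((m : ℂ) * (((h : ℂ) + Complex.I * z) / (k : ℂ))) + b) / (I * m' * z)
      = (ℏ : ℂ) * (d : ℂ) / (k : ℂ) + Complex.I * (d : ℂ) ^ 2 / ((m : ℂ) * (k : ℂ) * z) := by
    rw [hmC, hkC, hbC]; field_simp; linear_combination (-1) * I_sq
  rw [e0, e1, ZhAux.sI_neg] at hT
  have hT2 := ZhAux.T_add_nat (((r : ℂ) * (((h : ℂ) + Complex.I * z) / (k : ℂ))) / (I * m' * z)) him2 l
  have e2 : ((r : ℂ) * (((h : ℂ) + Complex.I * z) / (k : ℂ))) / (I * m' * z) + l *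
      ((ℏ : ℂ) * (d : ℂ) / (k : ℂ) + Complex.I * (d : ℂ) ^ 2 / ((m : ℂ) * (k : ℂ) * z)) =
     (r : ℂ) * (d : ℂ) / ((m : ℂ) * (k : ℂ)) + ((l : ℤ) : ℂ) * (ℏ : ℂ) * (d : ℂ) / (k : ℂ) +
            Complex.I * (((l : ℤ) : ℂ) - r * h / d) * (d : ℂ) ^ 2 / ((m : ℂ) * (k : ℂ) * z) := by
    rw [hmC, hkC]; push_cast; field_simp; ring_nf; simp only [I_sq]; ring
  rw [e2, hT] at hT2
  unfold ZhAux.T at hT2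
  rw [zpow_natCast]
  have key : ∀ A B C D E F1 F2 F3 Z1 Z2 : ℂ, A = B + C + D + E + F1 + F2 + F3 →
      Complex.exp A * Z2 = (-1) ^ l * Complex.exp B *
        (-I * Complex.exp C * Complex.exp D * (Complex.exp E * Z1)) →
      Z1 = I * (-1) ^ l * Complex.exp F1 * Complex.exp F2 * Complex.exp F3 * Z2 := by
    intro A B C D E F1 F2 F3 Z1 Z2 hA hZ
    have hs : ((-1 : ℂ) ^ l) * (-1) ^ l = 1 := by rw [← mul_pow]; simp
    rw [hA] at hZ
    simp only [Complex.exp_add] at hZ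
    have hn := mul_ne_zero (mul_ne_zero (mul_ne_zero (Complex.exp_ne_zero B)
      (Complex.exp_ne_zero C)) (Complex.exp_ne_zero D)) (Complex.exp_ne_zero E)
    apply mul_left_cancel₀ hn
    generalize ((-1 : ℂ) ^ l) = s at *
    linear_combination (-(I * s)) * hZ +
      (Complex.exp B * Complex.exp C * Complex.exp D * Complex.exp E * Z1 * s ^ 2) * I_sq -
      (Complex.exp B * Complex.exp C * Complex.exp D * Complex.exp E * Z1) * hs
  refine key _ _ _ _ _ _ _ _ _ _ ?_ hT2
  rw [hmC, hkC]; push_cast; field_simp; ring_nf; simp only [I_sq]; ring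
end
end

section
/- Let p_{5,±1}(n) denote the number of partitions of n all of whose parts are congruent to 1 or 4 modulo 5. Then, as n → ∞, p_{5,±1}(n) is asymptotically equivalent to (csc(π/5)/(4·3^{1/4}·5^{1/4}))·(n − 1/60)^{−3/4}·exp((2π/√15)·√(n − 1/60)); that is, the ratio of the two sides tends to 1. -/
open Filter Topology

noncomputable section

/-- `p_{5,±1}(n)`: the number of partitions of `n` all of whose parts are congruent to
`1` or `4` modulo `5`. -/
def p51 (n : ℕ) : ℕ :=
  Nat.card {π : n.Partition // ∀ i ∈ π.parts, i % 5 = 1 ∨ i % 5 = 4}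

/-- admissible parts -/
def adm (k : ℕ) : Prop := k % 5 = 1 ∨ k % 5 = 4

instance : DecidablePred adm := fun k => by unfold adm; infer_instance

/-- partitions with admissible parts at most N -/
def pN (N n : ℕ) : ℕ := (Nat.Partition.restricted n (fun k => adm k ∧ k ≤ N)).card

lemma p51_eq (n : ℕ) : p51 n = (Nat.Partition.restricted n adm).card := by
  unfold p51 Nat.Partition.restricted adm
  rw [Nat.card_eq_fintype_card, Fintype.card_subtype]

lemma pN_le (N n : ℕ) : pN N n ≤ p51 n := by
  rw [p51_eq]
  unfold pN Nat.Partition.restricted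
  apply Finset.card_le_card
  intro x hx
  simp only [Finset.mem_filter, Finset.mem_univ, true_and] at hx ⊢
  exact fun i hi => (hx i hi).1

lemma pN_eq {N n : ℕ} (h : n ≤ N) : pN N n = p51 n := by
  rw [p51_eq]
  unfold pN Nat.Partition.restricted
  congr 1
  apply Finset.filter_congr
  intro x _
  constructor
  · exact fun hx i hi => (hx i hi).1
  · intro hx i hi
    refine ⟨hx i hi, le_trans ?_ h⟩
    have := Multiset.le_sum_of_mem hi
    rwa [x.parts_sum] at this

/-- factor -/
def Gf (d : ℕ) : PowerSeries ℂ := PowerSeries.mk fun n => if d ∣ n then 1 else 0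

open PowerSeries PowerSeries.WithPiTopology in
lemma Gf_eq (d : ℕ) (hd : 0 < d) : (∑' j : ℕ, (X : PowerSeries ℂ) ^ (d * j)) = Gf d := by
  apply HasSum.tsum_eq
  rw [hasSum_iff_hasSum_coeff]
  intro n
  simp only [Gf, coeff_X_pow, coeff_mk]
  split_ifs with h
  · obtain ⟨c, rfl⟩ := h
    have : (fun i => if d * c = d * i then (1:ℂ) else 0) = fun i => if i = c then 1 else 0 := by
      ext i
      simp [hd.ne', eq_comm]
    rw [this]
    exact hasSum_ite_eq c 1
  · convert hasSum_zero using 2 with i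
    rw [if_neg]
    rintro rfl
    exact h (dvd_mul_right _ _)

open PowerSeries PowerSeries.WithPiTopology in
lemma pN_series (N : ℕ) : (PowerSeries.mk fun n => (pN N n : ℂ)) =
    ∏ i ∈ Finset.range N, if adm (i+1) then Gf (i+1) else 1 := by
  have h := Nat.Partition.hasProd_powerSeriesMk_card_restricted ℂ (fun k => adm k ∧ k ≤ N)
  refine h.unique ?_
  have h2 : (∏ i ∈ Finset.range N, if adm (i+1) then Gf (i+1) else 1) =
     ∏ i ∈ Finset.range N, (if (adm (i+1) ∧ i+1 ≤ N) then ∑' j : ℕ, (X : PowerSeries ℂ) ^ ((i + 1) * j) else 1) := by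
    apply Finset.prod_congr rfl
    intro i hi
    have : i + 1 ≤ N := by simpa using hi
    simp only [this, and_true]
    rw [Gf_eq _ (by omega)]
  rw [h2]
  apply hasProd_prod_of_ne_finset_one
  intro i hi
  rw [if_neg]
  simp at hi ⊢
  intro _; omega

lemma Gf_sum (d : ℕ) (hd : 0 < d) (q : ℂ) (hq : ‖q‖ < 1) :
    Summable (fun n => ‖PowerSeries.coeff n (Gf d) * q ^ n‖) ∧
    ∑' n, PowerSeries.coeff n (Gf d) * q ^ n = (1 - q ^ d)⁻¹ := by
  constructor
  · refine Summable.of_nonneg_of_le (fun _ => norm_nonneg _) ?_ (summable_geometric_of_lt_one (norm_nonneg q) hq)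
    intro n
    rw [Gf, PowerSeries.coeff_mk]
    split_ifs <;> simp
  · apply HasSum.tsum_eq
    have hqd : ‖q ^ d‖ < 1 := by
      rw [norm_pow]; exact pow_lt_one₀ (norm_nonneg _) hq hd.ne'
    have h := hasSum_geometric_of_norm_lt_one hqd
    have hinj : Function.Injective (fun j : ℕ => d * j) := fun a b hab => by
      simpa [hd.ne'] using hab
    rw [← hinj.hasSum_iff]
    · have : ((fun n => PowerSeries.coeff n (Gf d) * q ^ n) ∘ fun j : ℕ => d * j) = fun j => (q ^ d) ^ j := by
        ext j
        simp [Gf, pow_mul]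
      rw [this]
      exact h
    · intro n hn
      have h0 : PowerSeries.coeff n (Gf d) = 0 := by
        rw [Gf, PowerSeries.coeff_mk, if_neg]
        rintro ⟨c, rfl⟩
        exact hn ⟨c, rfl⟩
      rw [h0, zero_mul]

/-- finite product -/
def PN (N : ℕ) (q : ℂ) : ℂ := ∏ i ∈ Finset.range N, if adm (i+1) then (1 - q ^ (i+1))⁻¹ else 1

lemma ps_mul_sum (A B : PowerSeries ℂ) (q : ℂ) (i1 : Summable (fun n => ‖PowerSeries.coeff n A * q ^ n‖))
    (g1 : Summable (fun n => ‖PowerSeries.coeff n B * q ^ n‖)) :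
    Summable (fun n => ‖PowerSeries.coeff n (A * B) * q ^ n‖) ∧
    ∑' n, PowerSeries.coeff n (A * B) * q ^ n =
     (∑' n, PowerSeries.coeff n A * q ^ n) * (∑' n, PowerSeries.coeff n B * q ^ n) := by
  have key : ∀ n, PowerSeries.coeff n (A * B) * q ^ n
    = ∑ kl ∈ Finset.HasAntidiagonal.antidiagonal n, (PowerSeries.coeff kl.1 A * q ^ kl.1) * (PowerSeries.coeff kl.2 B * q ^ kl.2) := by
    intro n
    rw [PowerSeries.coeff_mul, Finset.sum_mul]
    apply Finset.sum_congr rfl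
    intro kl hkl
    rw [Finset.HasAntidiagonal.mem_antidiagonal] at hkl
    rw [← hkl, pow_add]; ring
  constructor
  · have h := summable_norm_sum_mul_antidiagonal_of_summable_norm i1 g1
    refine h.congr fun n => ?_
    rw [key n]
  · have h := tsum_mul_tsum_eq_tsum_sum_antidiagonal_of_summable_norm i1 g1
    refine Eq.trans (tsum_congr key) h.symm

lemma prod_sum (N : ℕ) (q : ℂ) (hq : ‖q‖ < 1) :
    Summable (fun n => ‖PowerSeries.coeff n (∏ i ∈ Finset.range N, if adm (i+1) then Gf (i+1) else 1) * q ^ n‖) ∧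
    ∑' n, PowerSeries.coeff n (∏ i ∈ Finset.range N, if adm (i+1) then Gf (i+1) else 1) * q ^ n = PN N q := by
  unfold PN
  induction N with
  | zero =>
    have h0 : ∀ n : ℕ, n ≠ 0 → PowerSeries.coeff n (1 : PowerSeries ℂ) * q ^ n = 0 := by
      intro n hn; simp [PowerSeries.coeff_one, hn]
    constructor
    · simp only [Finset.range_zero, Finset.prod_empty]
      apply summable_of_ne_finset_zero (s := {0})
      intro n hn
      rw [h0 n (by simpa using hn), norm_zero]
    · simp only [Finset.range_zero, Finset.prod_empty]
      rw [tsum_eq_single 0 h0]; simp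
  | succ N ih =>
    rw [Finset.prod_range_succ, Finset.prod_range_succ]
    by_cases h : adm (N+1)
    · simp only [if_pos h]
      obtain ⟨g1, g2⟩ := Gf_sum (N+1) (by omega) q hq
      obtain ⟨i1, i2⟩ := ih
      have := ps_mul_sum _ _ q i1 g1
      rwa [i2, g2] at this
    · simp only [if_neg h, mul_one]
      exact ih

lemma pN_sum (N : ℕ) (q : ℂ) (hq : ‖q‖ < 1) :
    HasSum (fun n => (pN N n : ℂ) * q ^ n) (PN N q) := by
  obtain ⟨h1, h2⟩ := prod_sum N q hq
  rw [← pN_series] at h1 h2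
  simp only [PowerSeries.coeff_mk] at h1 h2
  rw [← h2]
  exact h1.of_norm.hasSum

lemma p51_hasSum (q E E' : ℂ) (hq : ‖q‖ < 1) (hE : Tendsto (fun N => PN N q) atTop (𝓝 E))
    (hE' : Tendsto (fun N => PN N (‖q‖ : ℂ)) atTop (𝓝 E')) :
    Summable (fun n => (p51 n : ℝ) * ‖q‖ ^ n) ∧ HasSum (fun n => (p51 n : ℂ) * q ^ n) E := by
  have hqn : ‖((‖q‖ : ℝ) : ℂ)‖ < 1 := by simpa using hq
  have hS : Summable (fun n => (p51 n : ℝ) * ‖q‖ ^ n) := by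
    obtain ⟨B, hB⟩ := hE'.norm.bddAbove_range
    apply summable_of_sum_range_le (c := B)
    · intro n; positivity
    · intro M
      have h1 := pN_sum M (‖q‖ : ℂ) hqn
      have h2 : HasSum (fun n => (pN M n : ℝ) * ‖q‖ ^ n) (PN M (‖q‖ : ℂ)).re := by
        have := Complex.hasSum_re h1
        convert this using 2 with n
        have : ((pN M n : ℂ) * (‖q‖ : ℂ) ^ n) = (((pN M n : ℝ) * ‖q‖ ^ n : ℝ) : ℂ) := by push_cast; ring
        rw [this, Complex.ofReal_re]
      calc ∑ i ∈ Finset.range M, (p51 i : ℝ) * ‖q‖ ^ i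
          = ∑ i ∈ Finset.range M, (pN M i : ℝ) * ‖q‖ ^ i := by
            apply Finset.sum_congr rfl
            intro i hi
            rw [pN_eq (by simpa using (Finset.mem_range.mp hi).le)]
        _ ≤ (PN M (‖q‖ : ℂ)).re := sum_le_hasSum _ (fun i _ => by positivity) h2
        _ ≤ ‖PN M (‖q‖ : ℂ)‖ := Complex.re_le_norm _
        _ ≤ B := hB ⟨M, rfl⟩
  refine ⟨hS, ?_⟩
  have hS2 : Summable (fun n => (p51 n : ℂ) * q ^ n) := by
    apply Summable.of_norm
    convert hS using 2 with n
    simp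
  have ht : Tendsto (fun N => ∑' n, (pN N n : ℂ) * q ^ n) atTop (𝓝 (∑' n, (p51 n : ℂ) * q ^ n)) := by
    apply tendsto_tsum_of_dominated_convergence hS
    · intro n
      apply tendsto_const_nhds.congr'
      filter_upwards [eventually_ge_atTop n] with N hN
      rw [pN_eq hN]
    · filter_upwards with N n
      simp only [norm_mul, norm_pow, Complex.norm_natCast]
      gcongr
      exact_mod_cast pN_le N n
  have : (fun N => ∑' n, (pN N n : ℂ) * q ^ n) = fun N => PN N q := by
    ext N; exact (pN_sum N q hq).tsum_eq
  rw [this] at ht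
  rw [tendsto_nhds_unique hE ht]
  exact hS2.hasSum


lemma _root_.HasSum.congr_fun' {f g : ℕ → ℂ} {a : ℂ} (h : HasSum f a) (e : ∀ k, g k = f k) : HasSum g a := by
  rw [funext e]; exact h

/-- sum of q^k over admissible k -/
def gg (w : ℂ) : ℂ := (Complex.exp (-w) + Complex.exp (-(4*w))) / (1 - Complex.exp (-(5*w)))

lemma norm_exp_neg_lt {w : ℂ} (hw : 0 < w.re) : ‖Complex.exp (-w)‖ < 1 := by
  rw [Complex.norm_exp]; simpa using hw

lemma gg_hasSum (w : ℂ) (hw : 0 < w.re) :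
    HasSum (fun k : ℕ => if adm (k+1) then Complex.exp (-w) ^ (k+1) else 0) (gg w) := by
  set q := Complex.exp (-w) with hq
  have hq1 : ‖q‖ < 1 := norm_exp_neg_lt hw
  have hq5 : ‖q ^ 5‖ < 1 := by
    rw [norm_pow]; exact pow_lt_one₀ (norm_nonneg _) hq1 (by norm_num)
  have h := hasSum_geometric_of_norm_lt_one hq5
  have aux : ∀ r : ℕ, r < 5 → HasSum (fun k : ℕ => if (k+1) % 5 = (r+1)%5 then q ^ (k+1) else 0)
      ((1 - q^5)⁻¹ * q ^ (r+1)) := by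
    intro r hr
    have hinj : Function.Injective (fun j : ℕ => 5 * j + r) := fun a b hab => by
      simp at hab; exact hab
    rw [← hinj.hasSum_iff]
    · have : ((fun k : ℕ => if (k+1) % 5 = (r+1)%5 then q ^ (k+1) else 0) ∘ fun j : ℕ => 5 * j + r)
         = fun j => (q ^ 5) ^ j * q ^ (r+1) := by
        ext j
        simp only [Function.comp]
        rw [if_pos (by omega), ← pow_mul, ← pow_add]
        rfl
      rw [this]
      exact h.mul_right _
    · intro n hn
      rw [if_neg]
      intro h'
      apply hn
      refine ⟨n / 5, ?_⟩
      simp only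
      omega
  have h1 := aux 0 (by norm_num)
  have h4 := aux 3 (by norm_num)
  have := h1.add h4
  convert this using 1
  · ext k
    unfold adm
    by_cases a : (k+1) % 5 = 1
    · simp [a]
    · by_cases b : (k+1) % 5 = 4 <;> simp [a, b]
  · unfold gg
    have e4 : Complex.exp (-(4*w)) = q ^ 4 := by
      rw [hq, ← Complex.exp_nat_mul]; congr 1; push_cast; ring
    have e5 : Complex.exp (-(5*w)) = q ^ 5 := by
      rw [hq, ← Complex.exp_nat_mul]; congr 1; push_cast; ring
    rw [e4, e5, ← hq]
    ring

/-- log of the generating function -/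
def LL (z : ℂ) : ℂ := ∑' m : ℕ, gg ((m+1) * z) / (m+1)

def dbl (z : ℂ) (p : ℕ × ℕ) : ℂ :=
  if adm (p.1+1) then Complex.exp (-z) ^ ((p.1+1)*(p.2+1)) / (p.2+1) else 0

lemma dbl_summable (z : ℂ) (hz : 0 < z.re) : Summable (dbl z) := by
  set q := Complex.exp (-z) with hq
  have hq1 : ‖q‖ < 1 := norm_exp_neg_lt hz
  have hg := summable_geometric_of_lt_one (norm_nonneg q) hq1
  have h2 := hg.mul_of_nonneg hg (fun _ => by positivity) (fun _ => by positivity)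
  refine Summable.of_norm_bounded h2 ?_
  rintro ⟨k, m⟩
  unfold dbl
  rw [← hq]
  simp only
  split_ifs
  · rw [norm_div, norm_pow, ← pow_add]
    have h3 : (1:ℝ) ≤ ‖((m:ℂ)+1)‖ := by
      have : ((m:ℂ)+1) = ((m+1 : ℕ) : ℂ) := by push_cast; ring
      rw [this, Complex.norm_natCast]; push_cast; linarith [Nat.cast_nonneg (α := ℝ) m]
    calc ‖q‖ ^ ((k+1)*(m+1)) / ‖((m:ℂ)+1)‖ ≤ ‖q‖ ^ ((k+1)*(m+1)) / 1 := by gcongr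
      _ = ‖q‖ ^ ((k+1)*(m+1)) := div_one _
      _ ≤ _ := pow_le_pow_of_le_one (norm_nonneg _) hq1.le (by nlinarith [Nat.zero_le (k*m)])
  · rw [norm_zero]; positivity

lemma dbl_fiber_m (z : ℂ) (hz : 0 < z.re) (m : ℕ) :
    HasSum (fun k => dbl z (k, m)) (gg ((m+1) * z) / (m+1)) := by
  have h := (gg_hasSum ((m+1)*z) (by
    have : ((m:ℂ)+1) * z = ((m+1 : ℝ) : ℂ) * z := by push_cast; ring
    rw [this, Complex.re_ofReal_mul]; positivity)).div_const ((m:ℂ)+1)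
  refine h.congr_fun' fun k => ?_
  unfold dbl
  simp only
  split_ifs
  · rw [← Complex.exp_nat_mul, ← Complex.exp_nat_mul]
    congr 2; push_cast; ring
  · simp

lemma dbl_fiber_k (z : ℂ) (hz : 0 < z.re) (k : ℕ) :
    HasSum (fun m => dbl z (k, m))
      (if adm (k+1) then -Complex.log (1 - Complex.exp (-z) ^ (k+1)) else 0) := by
  unfold dbl
  simp only
  split_ifs
  · have hq : ‖Complex.exp (-z) ^ (k+1)‖ < 1 := by
      rw [norm_pow]; exact pow_lt_one₀ (norm_nonneg _) (norm_exp_neg_lt hz) (by omega)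
    have h := Complex.hasSum_taylorSeries_neg_log hq
    rw [← hasSum_nat_add_iff' 1] at h
    simp only [Finset.range_one, Finset.sum_singleton, pow_zero, Nat.cast_zero, div_zero, sub_zero] at h
    refine h.congr_fun' fun m => ?_
    rw [← pow_mul]
    push_cast
    rfl
  · exact hasSum_zero

lemma dbl_swap (z : ℂ) (hz : 0 < z.re) : HasSum (dbl z ∘ Equiv.prodComm ℕ ℕ) (∑' p, dbl z p) :=
  (Equiv.prodComm ℕ ℕ).hasSum_iff.mpr (dbl_summable z hz).hasSum

lemma dbl_fiber_m' (z : ℂ) (hz : 0 < z.re) (m : ℕ) :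
    HasSum (fun k => (dbl z ∘ Equiv.prodComm ℕ ℕ) (m, k)) (gg ((m+1) * z) / (m+1)) := by
  simp only [Function.comp, Equiv.prodComm_apply, Prod.swap_prod_mk]
  exact dbl_fiber_m z hz m

lemma LL_hasSum (z : ℂ) (hz : 0 < z.re) :
    HasSum (fun m : ℕ => gg ((m+1) * z) / (m+1)) (LL z) := by
  have h := (dbl_summable z hz)
  have h2 := dbl_swap z hz
  have h3 := HasSum.prod_fiberwise h2 (g := fun m : ℕ => gg ((m+1) * z) / (m+1)) (dbl_fiber_m' z hz)
  exact h3.summable.hasSum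

lemma LL_hasSum' (z : ℂ) (hz : 0 < z.re) :
    HasSum (fun k : ℕ => if adm (k+1) then -Complex.log (1 - Complex.exp (-z) ^ (k+1)) else 0) (LL z) := by
  have h := (dbl_summable z hz)
  have h2 := dbl_swap z hz
  have h3 := HasSum.prod_fiberwise h2 (g := fun m : ℕ => gg ((m+1) * z) / (m+1)) (dbl_fiber_m' z hz)
  have h4 : LL z = ∑' p, dbl z p := h3.tsum_eq
  rw [h4]
  exact h.hasSum.prod_fiberwise (fun k => dbl_fiber_k z hz k)

lemma PN_tendsto (z : ℂ) (hz : 0 < z.re) :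
    Tendsto (fun N => PN N (Complex.exp (-z))) atTop (𝓝 (Complex.exp (LL z))) := by
  have h := (Complex.continuous_exp.tendsto _).comp (LL_hasSum' z hz).tendsto_sum_nat
  refine h.congr fun N => ?_
  simp only [Function.comp, PN]
  rw [Complex.exp_sum]
  apply Finset.prod_congr rfl
  intro k _
  split_ifs
  · rw [Complex.exp_neg, Complex.exp_log]
    intro h0
    have hq : ‖Complex.exp (-z) ^ (k+1)‖ < 1 := by
      rw [norm_pow]; exact pow_lt_one₀ (norm_nonneg _) (norm_exp_neg_lt hz) (by omega)
    rw [← sub_eq_zero.mp h0] at hq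
    simp at hq
  · simp

lemma p51_gen (z : ℂ) (hz : 0 < z.re) :
    Summable (fun n => (p51 n : ℝ) * Real.exp (-z.re) ^ n) ∧
    HasSum (fun n => (p51 n : ℂ) * Complex.exp (-z) ^ n) (Complex.exp (LL z)) := by
  have hn : ‖Complex.exp (-z)‖ = Real.exp (-z.re) := by
    rw [Complex.norm_exp]; simp
  have := p51_hasSum (Complex.exp (-z)) _ (Complex.exp (LL (z.re : ℂ))) (norm_exp_neg_lt hz) (PN_tendsto z hz) (by
    rw [hn]
    have := PN_tendsto (z.re : ℂ) (by simpa using hz)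
    convert this using 3
    push_cast; rfl)
  rwa [hn] at this

lemma gg_re_le (t θ : ℝ) (ht : 0 < t) : (gg (t + θ * Complex.I)).re ≤ (gg t).re := by
  have h1 := Complex.hasSum_re (gg_hasSum (t + θ * Complex.I) (by simpa using ht))
  have h2 := Complex.hasSum_re (gg_hasSum (t:ℂ) (by simpa using ht))
  refine hasSum_le (fun k => ?_) h1 h2
  split_ifs
  · refine (Complex.re_le_norm _).trans (le_of_eq ?_)
    rw [← Complex.exp_nat_mul, ← Complex.exp_nat_mul, Complex.norm_exp]
    have : ((k+1 : ℕ):ℂ) * (-(t:ℂ)) = (((k+1:ℕ):ℝ) * (-t) : ℝ) := by push_cast; ring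
    rw [this, Complex.exp_ofReal_re]
    congr 1
    simp
  · simp

lemma LL_re_le (t θ : ℝ) (ht : 0 < t) :
    (LL (t + θ * Complex.I)).re ≤ (LL t).re - ((gg t).re - (gg (t + θ * Complex.I)).re) := by
  have h1 := Complex.hasSum_re (LL_hasSum (t + θ * Complex.I) (by simpa using ht))
  have h2 := Complex.hasSum_re (LL_hasSum (t:ℂ) (by simpa using ht))
  have h := h2.sub h1
  have hre : ∀ (m : ℕ) (w : ℂ), (w / ((m:ℂ)+1)).re = w.re / (m+1) := by
    intro m w
    have : ((m:ℂ)+1) = ((m+1 : ℝ) : ℂ) := by push_cast; ring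
    rw [this, Complex.div_ofReal_re]
  have key := le_hasSum h 0 (fun m _ => by
    rw [hre, hre, ← sub_div]
    apply div_nonneg _ (by positivity)
    rw [sub_nonneg]
    have := gg_re_le ((m+1)*t) ((m+1)*θ) (by positivity)
    have e1 : (((m+1)*t : ℝ) : ℂ) + (((m+1)*θ : ℝ) : ℂ) * Complex.I = ((m:ℂ)+1) * (t + θ * Complex.I) := by
      push_cast; ring
    have e2 : (((m+1)*t : ℝ) : ℂ) = ((m:ℂ)+1) * t := by push_cast; ring
    rwa [e1, e2] at this)
  simp at key
  linarith

lemma trig_ineq (θ : ℝ) : 1 - Real.cos θ ≤ 8 * (1 - Real.cos (3*θ)) + 2 * (1 - Real.cos (5*θ)) := by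
  have h3 := Real.cos_three_mul θ
  have h5 : Real.cos (5*θ) = 16 * Real.cos θ ^ 5 - 20 * Real.cos θ ^ 3 + 5 * Real.cos θ := by
    have : 5 * θ = 2 * θ + 3 * θ := by ring
    rw [this, Real.cos_add, Real.cos_two_mul, Real.sin_two_mul, Real.sin_three_mul, h3]
    have hs : Real.sin θ ^ 2 = 1 - Real.cos θ ^ 2 := by linarith [Real.sin_sq_add_cos_sq θ]
    have : 2 * Real.sin θ * Real.cos θ * (3 * Real.sin θ - 4 * Real.sin θ ^ 3)
      = 2 * Real.cos θ * (3 * Real.sin θ ^ 2 - 4 * (Real.sin θ ^ 2)^2) := by ring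
    rw [this, hs]; ring
  rw [h3, h5]
  set c := Real.cos θ
  have hc : c ≤ 1 := Real.cos_le_one θ
  have hpos : 0 ≤ 32*c^4+32*c^3+24*c^2+24*c+9 := by
    nlinarith [sq_nonneg (c^2+c/2-1/10), sq_nonneg (c+17/28)]
  nlinarith [mul_nonneg (sub_nonneg.mpr hc) hpos]

lemma normSq_one_add (r φ : ℝ) (w : ℂ) (hw : w = r * Complex.exp (φ * Complex.I)) :
    ‖1 + w‖ ^ 2 = (1+r)^2 - 2*r*(1 - Real.cos φ) := by
  rw [hw, ← Complex.normSq_eq_norm_sq, Complex.normSq_apply]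
  simp only [Complex.add_re, Complex.one_re, Complex.re_ofReal_mul, Complex.exp_ofReal_mul_I_re,
    Complex.add_im, Complex.one_im, Complex.im_ofReal_mul, Complex.exp_ofReal_mul_I_im]
  have := Real.sin_sq_add_cos_sq φ
  linear_combination r^2 * this

lemma gg_ratio (t θ X : ℝ) (ht : 0 < t) (hX : X * (1 - Real.exp (-5*t))^2 ≤ 2 * Real.exp (-5*t) * (1 - Real.cos (5*θ)) ∨
    ((1 + Real.exp (-3*t))^2 - 2 * Real.exp (-3*t) * (1 - Real.cos (3*θ))) * (1+X) ≤ (1 + Real.exp (-3*t))^2)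
    (hX0 : 0 ≤ X) :
    ‖gg (t + θ * Complex.I)‖ ^ 2 * (1 + X) ≤ ‖gg t‖ ^ 2 := by
  have form : ∀ w, gg w = Complex.exp (-w) * (1 + Complex.exp (-(3*w))) / (1 - Complex.exp (-(5*w))) := by
    intro w
    unfold gg
    rw [mul_add, mul_one, ← Complex.exp_add]
    congr 3; ring_nf
  have e3 : ‖1 + Complex.exp (-(3*((t:ℂ) + θ * Complex.I)))‖^2 = (1+Real.exp (-3*t))^2 - 2*Real.exp (-3*t)*(1 - Real.cos (3*θ)) := by
    rw [normSq_one_add (Real.exp (-3*t)) (-(3*θ)), Real.cos_neg]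
    push_cast
    rw [← Complex.exp_add]; congr 1; ring
  have e5 : ‖1 - Complex.exp (-(5*((t:ℂ) + θ * Complex.I)))‖^2 = (1-Real.exp (-5*t))^2 + 2*Real.exp (-5*t)*(1 - Real.cos (5*θ)) := by
    rw [sub_eq_add_neg, normSq_one_add (-Real.exp (-5*t)) (-(5*θ)), Real.cos_neg]
    · ring
    push_cast
    rw [neg_mul, ← Complex.exp_add]; congr 2; ring
  have f3 : ‖1 + Complex.exp (-(3*(t:ℂ)))‖^2 = (1+Real.exp (-3*t))^2 := by
    rw [normSq_one_add (Real.exp (-3*t)) 0]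
    · simp
    push_cast
    rw [← Complex.exp_add]; congr 1; ring
  have f5 : ‖1 - Complex.exp (-(5*(t:ℂ)))‖^2 = (1-Real.exp (-5*t))^2 := by
    rw [sub_eq_add_neg, normSq_one_add (-Real.exp (-5*t)) 0]
    · simp; ring
    push_cast
    rw [neg_mul, ← Complex.exp_add]; congr 2; ring
  have f1 : ‖Complex.exp (-((t:ℂ) + θ * Complex.I))‖ = Real.exp (-t) := by
    rw [Complex.norm_exp]; simp
  have f1' : ‖Complex.exp (-(t:ℂ))‖ = Real.exp (-t) := by
    rw [Complex.norm_exp]; simp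
  rw [form, form, norm_div, norm_div, norm_mul, norm_mul, div_pow, div_pow, mul_pow, mul_pow, e3, e5, f3, f5, f1, f1']
  have hr5 : Real.exp (-5*t) < 1 := by rw [Real.exp_lt_one_iff]; linarith
  have hr5' := Real.exp_pos (-5*t)
  have hr3' := Real.exp_pos (-3*t)
  set r5 := Real.exp (-5*t)
  set r3 := Real.exp (-3*t)
  have ha : 0 ≤ 1 - Real.cos (3*θ) := by linarith [Real.cos_le_one (3*θ)]
  have hb : 0 ≤ 1 - Real.cos (5*θ) := by linarith [Real.cos_le_one (5*θ)]
  set a := 1 - Real.cos (3*θ)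
  set b := 1 - Real.cos (5*θ)
  have hd : 0 < (1 - r5)^2 := by have : 0 < 1 - r5 := by linarith
                                 positivity
  have hd2 : 0 < (1 - r5)^2 + 2*r5*b := by positivity
  rw [div_mul_eq_mul_div, div_le_div_iff₀ hd2 hd]
  have hE : 0 < Real.exp (-t)^2 := by positivity
  suffices h : ((1+r3)^2 - 2*r3*a) * (1+X) * (1-r5)^2 ≤ (1+r3)^2 * ((1-r5)^2 + 2*r5*b) by
    nlinarith [mul_le_mul_of_nonneg_left h hE.le]
  have h3 : 0 ≤ 2*r3*a := by positivity
  have h5 : 0 ≤ 2*r5*b := by positivity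
  rcases hX with h | h
  · calc ((1+r3)^2 - 2*r3*a) * (1+X) * (1-r5)^2 ≤ (1+r3)^2 * (1+X) * (1-r5)^2 := by
          gcongr; linarith
      _ = (1+r3)^2 * ((1-r5)^2 + X * (1-r5)^2) := by ring
      _ ≤ _ := by gcongr
  · calc ((1+r3)^2 - 2*r3*a) * (1+X) * (1-r5)^2 ≤ (1+r3)^2 * (1-r5)^2 := by gcongr
      _ ≤ _ := by gcongr; linarith

lemma gg_case (t θ : ℝ) (ht : 0 < t) (ht1 : t ≤ 1) (hθ : |θ| ≤ Real.pi) :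
    ‖gg (t + θ * Complex.I)‖ ^ 2 * (1 + Real.exp (-5)/400 * min ((θ/t)^2) 1) ≤ ‖gg t‖ ^ 2 := by
  have hm0 : 0 ≤ min ((θ/t)^2) 1 := le_min (sq_nonneg _) zero_le_one
  have hm1 : min ((θ/t)^2) 1 ≤ 1 := min_le_right _ _
  have hm2 : min ((θ/t)^2) 1 ≤ (θ/t)^2 := min_le_left _ _
  set M := min ((θ/t)^2) 1
  have hr5 : Real.exp (-5*t) < 1 := by rw [Real.exp_lt_one_iff]; linarith
  have hr5' : Real.exp (-5) ≤ Real.exp (-5*t) := by gcongr; linarith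
  have hr3' : Real.exp (-5) ≤ Real.exp (-3*t) := by gcongr; linarith
  have hr3 : Real.exp (-3*t) < 1 := by rw [Real.exp_lt_one_iff]; linarith
  have h5t : 1 - Real.exp (-5*t) ≤ 5*t := by linarith [Real.add_one_le_exp (-5*t)]
  have he := Real.exp_pos (-5)
  have he1 : Real.exp (-5) < 1 := by rw [Real.exp_lt_one_iff]; norm_num
  have hpi := Real.pi_pos
  have hpi4 := Real.pi_lt_four
  apply gg_ratio t θ _ ht _ (by positivity)
  set e := Real.exp (-5)
  set r5 := Real.exp (-5*t)
  set r3 := Real.exp (-3*t)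
  by_cases hs : |θ| ≤ Real.pi / 5
  · left
    have hc := Real.cos_le_one_sub_mul_cos_sq (x := 5*θ) (by rw [abs_mul]; norm_num; linarith)
    have hb : 2/16 * (25 * θ^2) ≤ 1 - Real.cos (5*θ) := by
      have : 2/16 * (25 * θ^2) ≤ 2 / Real.pi^2 * (5*θ)^2 := by
        have h1 : (2:ℝ)/16 ≤ 2 / Real.pi^2 := by
          rw [div_le_div_iff₀ (by norm_num) (by positivity)]
          nlinarith
        have h2 : 25 * θ^2 = (5*θ)^2 := by ring
        rw [h2]
        gcongr
      linarith
    calc e/400 * M * (1 - r5)^2 ≤ e/400 * (θ/t)^2 * (5*t)^2 := by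
          gcongr
      _ = e/400 * (25 * θ^2) := by field_simp; norm_num
      _ ≤ 2 * e * (2/16 * (25 * θ^2)) := by nlinarith [mul_nonneg he.le (sq_nonneg θ)]
      _ ≤ 2 * r5 * (1 - Real.cos (5*θ)) := by gcongr
  · push Not at hs
    have hc := Real.cos_le_one_sub_mul_cos_sq hθ
    have hb : 2/25 ≤ 1 - Real.cos θ := by
      have h1 : (Real.pi/5)^2 ≤ θ^2 := by
        rw [← sq_abs θ]; gcongr
      have : 2/25 ≤ 2 / Real.pi^2 * θ^2 := by
        calc (2:ℝ)/25 = 2 / Real.pi^2 * (Real.pi/5)^2 := by field_simp; norm_num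
          _ ≤ _ := by gcongr
      linarith
    have htr := trig_ineq θ
    by_cases h5 : 1/50 ≤ 1 - Real.cos (5*θ)
    · left
      have h1 : (1-r5)^2 ≤ 1 := by nlinarith
      calc e/400 * M * (1 - r5)^2 ≤ e/400 * 1 * 1 := by gcongr
        _ ≤ 2 * e * (1/50) := by nlinarith
        _ ≤ _ := by gcongr
    · right
      have h3 : 1/200 ≤ 1 - Real.cos (3*θ) := by linarith
      have hX : e/400 * M ≤ r3/400 := by nlinarith
      have hr0 : 0 < r3 := Real.exp_pos _
      set X := e/400*M
      have hX0 : 0 ≤ X := by positivity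
      have hb2 : (1+r3)^2 ≤ 4 := by nlinarith
      have h1 : (1+r3)^2 - 2*r3*(1 - Real.cos (3*θ)) ≤ (1+r3)^2 * (1 - r3/400) := by
        nlinarith [mul_le_mul_of_nonneg_left h3 hr0.le, mul_le_mul_of_nonneg_left hb2 hr0.le]
      calc _ ≤ (1+r3)^2 * (1 - r3/400) * (1+X) := by gcongr
        _ ≤ (1+r3)^2 * (1 - r3/400) * (1+r3/400) := by
          gcongr
          have : 0 ≤ 1 - r3/400 := by linarith
          positivity
        _ = (1+r3)^2 * (1 - (r3/400)^2) := by ring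
        _ ≤ (1+r3)^2 * 1 := by gcongr; nlinarith
        _ = _ := mul_one _

lemma gg_real (t : ℝ) : gg t = (((Real.exp (-t) + Real.exp (-(4*t))) / (1 - Real.exp (-(5*t))) : ℝ) : ℂ) := by
  unfold gg; push_cast; rfl

lemma gg_bound : ∃ c > 0, ∀ t θ : ℝ, 0 < t → t ≤ 1 → |θ| ≤ Real.pi →
    c * (min ((θ/t)^2) 1 / t) ≤ (gg t).re - (gg (t + θ * Complex.I)).re := by
  refine ⟨Real.exp (-1) / 5 * (Real.exp (-5)/400/4), by positivity, ?_⟩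
  intro t θ ht ht1 hθ
  have h := gg_case t θ ht ht1 hθ
  have hm0 : 0 ≤ min ((θ/t)^2) 1 := le_min (sq_nonneg _) zero_le_one
  have hm1 : min ((θ/t)^2) 1 ≤ 1 := min_le_right _ _
  set M := min ((θ/t)^2) 1
  have he := Real.exp_pos (-5)
  have he1 : Real.exp (-5) < 1 := by rw [Real.exp_lt_one_iff]; norm_num
  have hr5 : Real.exp (-(5*t)) < 1 := by rw [Real.exp_lt_one_iff]; linarith
  have h5t : 1 - Real.exp (-(5*t)) ≤ 5*t := by linarith [Real.add_one_le_exp (-(5*t))]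
  have hG : Real.exp (-1) / 5 / t ≤ (gg t).re := by
    rw [gg_real, Complex.ofReal_re, div_div]
    have h1 : Real.exp (-1) ≤ Real.exp (-t) := by gcongr
    have := Real.exp_pos (-(4*t))
    apply div_le_div₀
    · positivity
    · linarith
    · linarith
    · linarith
  have hGn : ‖gg t‖ = (gg t).re := by
    have hG0 : 0 < (gg t).re := lt_of_lt_of_le (by positivity) hG
    have h0 : (gg t) = ((gg t).re : ℂ) := by rw [gg_real, Complex.ofReal_re]
    rw [h0, Complex.norm_real, Complex.ofReal_re, Real.norm_eq_abs, abs_of_pos hG0]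
  rw [hGn] at h
  have hre := Complex.re_le_norm (gg (t + θ * Complex.I))
  have hn0 := norm_nonneg (gg (t + θ * Complex.I))
  set G := (gg t).re
  set n := ‖gg (t + θ * Complex.I)‖
  set X := Real.exp (-5)/400 * M with hXd
  have hX0 : 0 ≤ X := by positivity
  have hX1 : X ≤ 1 := by rw [hXd]; nlinarith
  have hG0 : 0 < G := lt_of_lt_of_le (by positivity) hG
  have key : n ≤ G * (1 - X/4) := by
    have h1 : 0 ≤ G * (1 - X/4) := by
      have : 0 ≤ 1 - X/4 := by linarith
      positivity
    apply le_of_sq_le_sq _ h1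
    have h2 : 1 ≤ (1 - X/4)^2 * (1+X) := by nlinarith [mul_nonneg hX0 (sub_nonneg.mpr hX1), pow_nonneg hX0 3]
    have h3 : n^2 * (1+X) ≤ (G * (1-X/4))^2 * (1+X) := by
      calc n^2 * (1+X) ≤ G^2 * 1 := by linarith
        _ ≤ G^2 * ((1 - X/4)^2 * (1+X)) := by gcongr
        _ = _ := by ring
    exact le_of_mul_le_mul_right h3 (by linarith)
  have h4 : Real.exp (-1) / 5 / t * (X/4) ≤ G * (X/4) := by gcongr
  have h5 : Real.exp (-1) / 5 * (Real.exp (-5) / 400 / 4) * (M / t) = Real.exp (-1) / 5 / t * (X/4) := by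
    rw [hXd]; ring
  rw [h5]
  nlinarith

open MeasureTheory Set in
lemma frul_exp_int_aux (a b : ℝ) (ha : 0 < a) (hab : a ≤ b) :
    IntegrableOn (fun x : ℝ => x⁻¹ • (Real.exp (-(a * x)) - Real.exp (-(b * x)))) (Ioi 0) := by
  have hi : IntegrableOn (fun x : ℝ => (b-a) * Real.exp (-a * x)) (Ioi 0) :=
    (integrableOn_exp_mul_Ioi (by linarith) 0).const_mul (b-a)
  refine Integrable.mono' hi ?_ ?_
  · apply Measurable.aestronglyMeasurable
    fun_prop
  · refine (ae_restrict_iff' measurableSet_Ioi).mpr (ae_of_all _ ?_)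
    intro x hx
    have hx : 0 < x := hx
    have h0 : Real.exp (-(b*x)) ≤ Real.exp (-(a*x)) := by
      apply Real.exp_le_exp.mpr; nlinarith
    rw [smul_eq_mul, Real.norm_eq_abs, abs_of_nonneg (mul_nonneg (by positivity) (by linarith))]
    have h1 : Real.exp (-(b*x)) = Real.exp (-(a*x)) * Real.exp (-((b-a)*x)) := by
      rw [← Real.exp_add]; congr 1; ring
    have h2 := Real.add_one_le_exp (-((b-a)*x))
    have h3 := Real.exp_pos (-(a*x))
    have h4 : Real.exp (-(a*x)) - Real.exp (-(b*x)) ≤ Real.exp (-(a*x)) * ((b-a)*x) := by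
      rw [h1]; nlinarith
    calc x⁻¹ * (Real.exp (-(a*x)) - Real.exp (-(b*x))) ≤ x⁻¹ * (Real.exp (-(a*x)) * ((b-a)*x)) := by gcongr
      _ = (b-a) * Real.exp (-a*x) := by
        rw [neg_mul]; field_simp

open MeasureTheory Set in
lemma frul_exp_int (a b : ℝ) (ha : 0 < a) (hb : 0 < b) :
    IntegrableOn (fun x : ℝ => x⁻¹ • (Real.exp (-(a * x)) - Real.exp (-(b * x)))) (Ioi 0) := by
  rcases le_total a b with h | h
  · exact frul_exp_int_aux a b ha h
  · refine (frul_exp_int_aux b a hb h).neg.congr (ae_of_all _ fun x => ?_)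
    simp only [Pi.neg_apply, smul_eq_mul]; ring

open MeasureTheory Set in
lemma frul_exp (a b : ℝ) (ha : 0 < a) (hb : 0 < b) :
    ∫ x in Ioi (0:ℝ), x⁻¹ • (Real.exp (-(a * x)) - Real.exp (-(b * x))) = Real.log (b / a) := by
  have := Frullani.integral_Ioi_eq (f := fun x : ℝ => Real.exp (-x)) (a := a) (b := b) (L := 1) (R := 0)
    (by
      apply ContinuousOn.locallyIntegrableOn _ measurableSet_Ioi
      fun_prop) ha hb
    (by
      have : Tendsto (fun x : ℝ => Real.exp (-x)) (𝓝 0) (𝓝 (Real.exp (-0))) := by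
        apply Continuous.tendsto; fun_prop
      simp at this
      exact this.mono_left nhdsWithin_le_nhds)
    (Real.tendsto_exp_neg_atTop_nhds_zero) (frul_exp_int a b ha hb)
  rw [this]; simp

/-- terms -/
def Tk (k : ℕ) (x : ℝ) : ℝ := x⁻¹ • (Real.exp (-((5*k+1) * x)) - Real.exp (-((5*k+5/2) * x)))
  + x⁻¹ • (Real.exp (-((5*k+4) * x)) - Real.exp (-((5*k+5/2) * x)))

def ck (k : ℕ) : ℝ := Real.log ((5*k+5/2)/(5*k+1)) + Real.log ((5*k+5/2)/(5*k+4))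

section

open MeasureTheory Set

lemma Tk_int (k : ℕ) : IntegrableOn (Tk k) (Ioi 0) :=
  (frul_exp_int _ _ (by positivity) (by positivity)).add (frul_exp_int _ _ (by positivity) (by positivity))

lemma Tk_integral (k : ℕ) : ∫ x in Ioi (0:ℝ), Tk k x = ck k := by
  unfold Tk
  rw [integral_add (frul_exp_int _ _ (by positivity) (by positivity)) (frul_exp_int _ _ (by positivity) (by positivity)),
    frul_exp _ _ (by positivity) (by positivity), frul_exp _ _ (by positivity) (by positivity)]
  rfl

lemma Tk_nonneg (k : ℕ) (x : ℝ) (hx : 0 < x) : 0 ≤ Tk k x := by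
  unfold Tk
  have e1 : Real.exp (-((5*k+1) * x)) = Real.exp (-((5*k+5/2) * x)) * Real.exp (3/2*x) := by
    rw [← Real.exp_add]; congr 1; ring
  have e2 : Real.exp (-((5*k+4) * x)) = Real.exp (-((5*k+5/2) * x)) * Real.exp (-(3/2*x)) := by
    rw [← Real.exp_add]; congr 1; ring
  rw [e1, e2, smul_eq_mul, smul_eq_mul, ← mul_add]
  apply mul_nonneg (by positivity)
  have h1 := Real.add_one_le_exp (3/2*x)
  have h2 := Real.add_one_le_exp (-(3/2*x))
  nlinarith [Real.exp_pos (-((5*k+5/2) * x))]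

lemma ck_nonneg (k : ℕ) : 0 ≤ ck k := by
  rw [← Tk_integral]
  exact setIntegral_nonneg measurableSet_Ioi fun x hx => Tk_nonneg k x hx

lemma sin5_pos : 0 < Real.sin (Real.pi / 5) :=
  Real.sin_pos_of_pos_of_lt_pi (by positivity) (by linarith [Real.pi_pos])

lemma ck_hasSum : HasSum ck (-Real.log (Real.sin (Real.pi / 5))) := by
  rw [hasSum_iff_tendsto_nat_of_nonneg ck_nonneg]
  rw [← tendsto_add_atTop_iff_nat 1]
  have h1 := Real.BohrMollerup.tendsto_log_gamma (x := 1/5) (by norm_num)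
  have h2 := Real.BohrMollerup.tendsto_log_gamma (x := 4/5) (by norm_num)
  have h3 := Real.BohrMollerup.tendsto_log_gamma (x := 1/2) (by norm_num)
  have h := (h1.add h2).sub (h3.const_mul 2)
  have hval : Real.log (Real.Gamma (1/5)) + Real.log (Real.Gamma (4/5)) - 2 * Real.log (Real.Gamma (1/2))
     = -Real.log (Real.sin (Real.pi / 5)) := by
    rw [← Real.log_mul (Real.Gamma_pos_of_pos (by norm_num)).ne' (Real.Gamma_pos_of_pos (by norm_num)).ne']
    have := Real.Gamma_mul_Gamma_one_sub (1/5)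
    rw [show (1:ℝ) - 1/5 = 4/5 by norm_num, mul_one_div] at this
    rw [this, Real.log_div Real.pi_pos.ne' sin5_pos.ne', Real.Gamma_one_half_eq, Real.log_sqrt Real.pi_pos.le]
    ring
  rw [hval] at h
  refine h.congr fun n => ?_
  unfold Real.BohrMollerup.logGammaSeq
  have hk : ∀ k : ℕ, ck k = 2 * Real.log (1/2 + k) - Real.log (1/5 + k) - Real.log (4/5 + k) := by
    intro k
    unfold ck
    rw [show ((5:ℝ)*k+5/2)/(5*k+1) = (1/2+k)/(1/5+k) by field_simp; ring,
      show ((5:ℝ)*k+5/2)/(5*k+4) = (1/2+k)/(4/5+k) by field_simp; ring,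
      Real.log_div (by positivity) (by positivity), Real.log_div (by positivity) (by positivity)]
    ring
  simp_rw [hk]
  rw [Finset.sum_sub_distrib, Finset.sum_sub_distrib, ← Finset.mul_sum]
  ring

def A1 (x : ℝ) : ℝ := x⁻¹ * ((Real.exp (-x) + Real.exp (-(4*x)) - 2 * Real.exp (-(5/2*x))) / (1 - Real.exp (-(5*x))))

lemma Tk_sum (x : ℝ) (hx : 0 < x) : ∑' k, Tk k x = A1 x := by
  apply HasSum.tsum_eq
  have hr : Real.exp (-(5*x)) < 1 := by rw [Real.exp_lt_one_iff]; linarith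
  have h := (hasSum_geometric_of_lt_one (Real.exp_pos _).le hr).mul_left
    (x⁻¹ * (Real.exp (-x) + Real.exp (-(4*x)) - 2 * Real.exp (-(5/2*x))))
  have e : (fun k => Tk k x) = fun k => (x⁻¹ * (Real.exp (-x) + Real.exp (-(4*x)) - 2 * Real.exp (-(5/2*x)))) * Real.exp (-(5*x)) ^ k := by
    ext k
    unfold Tk
    have ee : ∀ c : ℝ, Real.exp (-((5*k+c)*x)) = Real.exp (-(c*x)) * Real.exp (-(5*x)) ^ k := by
      intro c
      rw [← Real.exp_nat_mul, ← Real.exp_add]; congr 1; ring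
    rw [ee, ee, ee]
    simp only [smul_eq_mul, one_mul]; ring
  have e2 : A1 x = (x⁻¹ * (Real.exp (-x) + Real.exp (-(4*x)) - 2 * Real.exp (-(5/2*x)))) * (1 - Real.exp (-(5*x)))⁻¹ := by
    unfold A1; rw [div_eq_mul_inv]; ring
  rw [e, e2]
  exact h

lemma A1_integral : IntegrableOn A1 (Ioi 0) ∧ ∫ x in Ioi (0:ℝ), A1 x = -Real.log (Real.sin (Real.pi / 5)) := by
  have hn : ∀ k, ∫ x in Ioi (0:ℝ), ‖Tk k x‖ = ck k := by
    intro k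
    rw [← Tk_integral]
    apply setIntegral_congr_fun measurableSet_Ioi
    intro x hx
    simp only
    rw [Real.norm_of_nonneg (Tk_nonneg k x hx)]
  have h := hasSum_integral_of_summable_integral_norm (μ := volume.restrict (Ioi (0:ℝ))) (F := Tk) Tk_int (by
    simp_rw [hn]; exact ck_hasSum.summable)
  simp_rw [Tk_integral] at h
  have h2 := h.unique ck_hasSum
  have h3 : ∫ x in Ioi (0:ℝ), ∑' k, Tk k x = ∫ x in Ioi (0:ℝ), A1 x := by
    apply setIntegral_congr_fun measurableSet_Ioi
    intro x hx
    exact Tk_sum x hx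
  rw [h3] at h2
  refine ⟨?_, h2⟩
  apply Integrable.of_integral_ne_zero
  rw [h2, neg_ne_zero]
  apply ne_of_lt
  apply Real.log_neg sin5_pos
  have : Real.sin (Real.pi/5) < Real.sin (Real.pi/2) := by
    apply Real.sin_lt_sin_of_lt_of_le_pi_div_two <;> linarith [Real.pi_pos]
  simpa using this

def Hc (x : ℝ) : ℝ := (1 + Real.exp (-(2*x))) / (1 - Real.exp (-(2*x))) - x⁻¹

def A2 (x : ℝ) : ℝ := x⁻¹ • (Hc (5/4*x) - Hc (5/2*x))

lemma Hc_zero : Tendsto Hc (𝓝[>] 0) (𝓝 0) := by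
  have hb : ∀ᶠ x in 𝓝[>] (0:ℝ), ‖Hc x‖ ≤ (1 + (1+x)*4*Real.exp (2*x)) * (1+2*x) * x := by
    filter_upwards [self_mem_nhdsWithin] with x hx
    have hx : 0 < x := hx
    have hd : 2*x/(1+2*x) ≤ 1 - Real.exp (-(2*x)) := by
      have h1 : Real.exp (-(2*x)) ≤ 1/(1+2*x) := by
        rw [Real.exp_neg, ← one_div]
        apply one_div_le_one_div_of_le (by positivity)
        linarith [Real.add_one_le_exp (2*x)]
      have : 2*x/(1+2*x) = 1 - 1/(1+2*x) := by field_simp; ring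
      linarith
    have hd0 : 0 < 2*x/(1+2*x) := by positivity
    have hρ := Complex.norm_exp_sub_sum_le_norm_mul_exp (((-(2*x) : ℝ)) : ℂ) 3
    have hρ2 : |Real.exp (-(2*x)) - (1 - 2*x + 2*x^2)| ≤ 8*x^3*Real.exp (2*x) := by
      rw [← Complex.ofReal_exp] at hρ
      have : ∑ m ∈ Finset.range 3, (((-(2*x) : ℝ)) : ℂ) ^ m / (m.factorial : ℂ) = ((1 - 2*x + 2*x^2 : ℝ) : ℂ) := by
        simp [Finset.sum_range_succ, Nat.factorial]; ring
      rw [this, ← Complex.ofReal_sub, Complex.norm_real, Complex.norm_real, Real.norm_eq_abs, Real.norm_eq_abs, abs_neg, abs_of_pos (by positivity : 0 < 2*x)] at hρ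
      calc _ ≤ _ := hρ
        _ = _ := by ring
    set ρ := Real.exp (-(2*x)) - (1 - 2*x + 2*x^2) with hρd
    have hH : Hc x = (2*x^3 + x*ρ + ρ) / (x * (1 - Real.exp (-(2*x)))) := by
      unfold Hc
      have : 1 - Real.exp (-(2*x)) ≠ 0 := by linarith
      rw [hρd]
      field_simp
      ring
    rw [hH, norm_div, Real.norm_eq_abs, Real.norm_eq_abs, abs_of_pos (mul_pos hx (by linarith) : 0 < x * (1 - Real.exp (-(2*x))))]
    have hnum : |2*x^3 + x*ρ + ρ| ≤ 2*x^3 + (1+x)*(8*x^3*Real.exp (2*x)) := by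
      have : 2*x^3 + x*ρ + ρ = 2*x^3 + (1+x)*ρ := by ring
      rw [this]
      refine (abs_add_le _ _).trans ?_
      rw [abs_of_pos (by positivity : 0 < 2*x^3), abs_mul (1+x) ρ, abs_of_pos (by positivity : 0 < 1+x)]
      gcongr
    calc |2*x^3 + x*ρ + ρ| / (x * (1 - Real.exp (-(2*x)))) ≤ (2*x^3 + (1+x)*(8*x^3*Real.exp (2*x))) / (x * (2*x/(1+2*x))) := by
          gcongr
      _ = _ := by field_simp; ring
  apply squeeze_zero_norm' hb
  have : Tendsto (fun x : ℝ => (1 + (1+x)*4*Real.exp (2*x)) * (1+2*x) * x) (𝓝 0) (𝓝 ((1 + (1+0)*4*Real.exp (2*0)) * (1+2*0) * 0)) := by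
    apply Continuous.tendsto (f := fun x : ℝ => (1 + (1+x)*4*Real.exp (2*x)) * (1+2*x) * x); fun_prop
  rw [mul_zero] at this
  exact this.mono_left nhdsWithin_le_nhds

lemma Hc_top : Tendsto Hc atTop (𝓝 1) := by
  have h : Tendsto (fun x : ℝ => Real.exp (-(2*x))) atTop (𝓝 0) :=
    Real.tendsto_exp_neg_atTop_nhds_zero.comp (tendsto_id.const_mul_atTop (by norm_num : (0:ℝ) < 2))
  have := ((h.const_add 1).div (h.const_sub 1) (by norm_num)).sub tendsto_inv_atTop_zero
  have h2 : Tendsto (fun x : ℝ => (1 + Real.exp (-(2*x))) / (1 - Real.exp (-(2*x))) - x⁻¹) atTop (𝓝 1) := by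
    simpa using this
  exact h2

lemma A2_integral (h : IntegrableOn A2 (Ioi 0)) : ∫ x in Ioi (0:ℝ), A2 x = -Real.log 2 := by
  have := Frullani.integral_Ioi_eq (f := Hc) (a := 5/4) (b := 5/2) (L := 0) (R := 1)
    (by
      apply ContinuousOn.locallyIntegrableOn _ measurableSet_Ioi
      unfold Hc
      intro x hx
      have hx : 0 < x := hx
      have : 1 - Real.exp (-(2*x)) ≠ 0 := by
        have : Real.exp (-(2*x)) < 1 := by rw [Real.exp_lt_one_iff]; linarith
        linarith
      apply ContinuousAt.continuousWithinAt
      fun_prop (disch := first | assumption | exact hx.ne')) (by norm_num) (by norm_num)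
    Hc_zero Hc_top h
  unfold A2
  rw [this]; norm_num

def phr (x : ℝ) : ℝ := ((Real.exp (-x) + Real.exp (-(4*x))) / (1 - Real.exp (-(5*x))) - 2/(5*x)) / x

lemma phr_split (x : ℝ) (hx : 0 < x) : phr x = A1 x + A2 x := by
  unfold phr A1 A2 Hc
  have e1 : Real.exp (-(2*(5/4*x))) = Real.exp (-(5/2*x)) := by congr 1; ring
  have e2 : Real.exp (-(5*x)) = Real.exp (-(5/2*x)) ^ 2 := by
    rw [← Real.exp_nat_mul]; congr 1; push_cast; ring
  have e3 : Real.exp (-(2*(5/2*x))) = Real.exp (-(5/2*x)) ^ 2 := by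
    rw [← Real.exp_nat_mul]; congr 1; push_cast; ring
  have hr : Real.exp (-(5/2*x)) < 1 := by rw [Real.exp_lt_one_iff]; linarith
  have hr0 := Real.exp_pos (-(5/2*x))
  rw [e1, e2, e3, smul_eq_mul]
  set r := Real.exp (-(5/2*x))
  have h1 : 1 - r ≠ 0 := by linarith
  have h2 : 1 - r^2 ≠ 0 := by nlinarith
  have h3 : 1 - r^2 = (1-r)*(1+r) := by ring
  have h4 : 1 + r ≠ 0 := by linarith
  rw [h3]
  field_simp
  ring

lemma phr_integral (h : IntegrableOn phr (Ioi 0)) :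
    ∫ x in Ioi (0:ℝ), phr x = -Real.log (2 * Real.sin (Real.pi / 5)) := by
  have hA2 : IntegrableOn A2 (Ioi 0) := by
    refine (h.sub A1_integral.1).congr ?_
    refine (ae_restrict_iff' measurableSet_Ioi).mpr (ae_of_all _ ?_)
    intro x hx
    simp only [Pi.sub_apply]
    rw [phr_split x hx]; ring
  rw [setIntegral_congr_fun measurableSet_Ioi (g := fun x => A1 x + A2 x) (fun x hx => phr_split x hx),
    integral_add A1_integral.1 hA2, A1_integral.2, A2_integral hA2, Real.log_mul (by norm_num) sin5_pos.ne']
  ring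


end

def ph (w : ℂ) : ℂ := (gg w - 2/(5*w))/w

lemma one_sub_exp_lower (w : ℂ) (hx : 0 < w.re) : 5*w.re/(1+5*w.re) ≤ ‖1 - Complex.exp (-(5*w))‖ := by
  have h0 : ‖Complex.exp (-(5*w))‖ = Real.exp (-(5*w.re)) := by
    rw [Complex.norm_exp]; simp
  have h1 : Real.exp (-(5*w.re)) ≤ 1/(1+5*w.re) := by
    rw [Real.exp_neg, ← one_div]
    apply one_div_le_one_div_of_le (by positivity)
    linarith [Real.add_one_le_exp (5*w.re)]
  have h2 : 5*w.re/(1+5*w.re) = 1 - 1/(1+5*w.re) := by field_simp; ring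
  have h3 := norm_sub_norm_le 1 (Complex.exp (-(5*w)))
  rw [norm_one, h0] at h3
  linarith

lemma ph_num_bound (w : ℂ) : ‖5*w*(Complex.exp (-w) + Complex.exp (-(4*w))) - 2*(1 - Complex.exp (-(5*w)))‖
    ≤ 335 * ‖w‖^3 * Real.exp (5*‖w‖) := by
  have r1 := Complex.norm_exp_sub_sum_le_norm_mul_exp (-w) 2
  have r2 := Complex.norm_exp_sub_sum_le_norm_mul_exp (-(4*w)) 2
  have r3 := Complex.norm_exp_sub_sum_le_norm_mul_exp (-(5*w)) 3
  simp only [Finset.sum_range_succ, Finset.sum_range_zero, norm_neg, norm_mul, Complex.norm_ofNat] at r1 r2 r3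
  norm_num [Nat.factorial] at r1 r2 r3
  have e1 : Real.exp ‖w‖ ≤ Real.exp (5*‖w‖) := Real.exp_le_exp.mpr (by linarith [norm_nonneg w])
  have e2 : Real.exp (4*‖w‖) ≤ Real.exp (5*‖w‖) := Real.exp_le_exp.mpr (by linarith [norm_nonneg w])
  set ρ1 := Complex.exp (-w) - (1 + -w) with h1
  set ρ2 := Complex.exp (-(4*w)) - (1 + -(4*w)) with h2
  set ρ3 := Complex.exp (-(5*w)) - (1 + -(5*w) + (5*w)^2/2) with h3
  have e : 5*w*(Complex.exp (-w) + Complex.exp (-(4*w))) - 2*(1 - Complex.exp (-(5*w))) = 5*w*(ρ1+ρ2) + 2*ρ3 := by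
    rw [h1, h2, h3]; ring
  rw [e]
  set E := Real.exp (5*‖w‖)
  have k1 : ‖ρ1‖ ≤ ‖w‖^2*E := r1.trans (by gcongr)
  have k2 : ‖ρ2‖ ≤ (4*‖w‖)^2*E := r2.trans (by gcongr)
  calc _ ≤ ‖5*w*(ρ1+ρ2)‖ + ‖2*ρ3‖ := norm_add_le _ _
    _ = 5*‖w‖*‖ρ1+ρ2‖ + 2*‖ρ3‖ := by simp
    _ ≤ 5*‖w‖*(‖w‖^2*E+(4*‖w‖)^2*E) + 2*((5*‖w‖)^3*E) := by
      gcongr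
      exact (norm_add_le _ _).trans (by gcongr)
    _ = _ := by ring

lemma ph_bound : ∃ K > 0, ∀ w : ℂ, 0 < w.re → |w.im| ≤ w.re → ‖ph w‖ ≤ K / (1 + w.re^2) := by
  refine ⟨400 * Real.exp 10, by positivity, ?_⟩
  intro w hx hy
  have hw2 : ‖w‖ ≤ 2*w.re := by
    have := Complex.norm_le_abs_re_add_abs_im w
    rw [abs_of_pos hx] at this; linarith
  have hwx : w.re ≤ ‖w‖ := Complex.re_le_norm w
  have hw0 : 0 < ‖w‖ := by linarith
  have hwn : w ≠ 0 := norm_pos_iff.mp hw0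
  have hlow := one_sub_exp_lower w hx
  have hl0 : 0 < 5*w.re/(1+5*w.re) := by positivity
  have hden : 1 - Complex.exp (-(5*w)) ≠ 0 := norm_pos_iff.mp (by linarith)
  rcases le_total w.re 1 with h | h
  · have e : ph w = (5*w*(Complex.exp (-w) + Complex.exp (-(4*w))) - 2*(1 - Complex.exp (-(5*w)))) / (5*w^2*(1 - Complex.exp (-(5*w)))) := by
      unfold ph gg
      generalize Complex.exp (-(5*w)) = q at hden ⊢
      field_simp
    rw [e, norm_div]
    have hlow2 : 5*w.re/6 ≤ ‖1 - Complex.exp (-(5*w))‖ := by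
      refine le_trans ?_ hlow
      gcongr; linarith
    have hn := ph_num_bound w
    have he : Real.exp (5*‖w‖) ≤ Real.exp 10 := Real.exp_le_exp.mpr (by linarith)
    have hd : ‖5*w^2*(1 - Complex.exp (-(5*w)))‖ = 5*‖w‖^2*‖1 - Complex.exp (-(5*w))‖ := by simp
    rw [hd]
    calc _ ≤ (335 * ‖w‖^3 * Real.exp 10) / (5*‖w‖^2*(5*w.re/6)) := by
          gcongr
          exact hn.trans (by gcongr)
      _ = 335*6/25*Real.exp 10 * (‖w‖ / w.re) := by field_simp; norm_num
      _ ≤ 335*6/25*Real.exp 10 * 2 := by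
          gcongr; rw [div_le_iff₀ hx]; linarith
      _ ≤ 400 * Real.exp 10 / 2 := by nlinarith [Real.exp_pos 10]
      _ ≤ _ := by gcongr; nlinarith
  · have hg : ‖gg w‖ ≤ 3 / w.re := by
      unfold gg
      rw [norm_div]
      have a1 : ‖Complex.exp (-w)‖ ≤ 1/w.re := by
        rw [Complex.norm_exp, Complex.neg_re, Real.exp_neg, ← one_div]
        apply one_div_le_one_div_of_le hx; linarith [Real.add_one_le_exp w.re]
      have a2 : ‖Complex.exp (-(4*w))‖ ≤ 1/w.re := by
        refine le_trans ?_ a1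
        rw [Complex.norm_exp, Complex.norm_exp]
        apply Real.exp_le_exp.mpr; simp; linarith
      have a3 : 5/6 ≤ ‖1 - Complex.exp (-(5*w))‖ := by
        refine le_trans ?_ hlow
        rw [div_le_div_iff₀ (by norm_num) (by positivity)]; linarith
      calc _ ≤ (1/w.re+1/w.re)/(5/6) := by
            gcongr
            exact (norm_add_le _ _).trans (by gcongr)
        _ ≤ _ := by
            have : (1/w.re+1/w.re)/(5/6) = (12/5)/w.re := by field_simp; norm_num
            rw [this]; gcongr; norm_num
    have hg2 : ‖2/(5*w)‖ ≤ 1/w.re := by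
      rw [norm_div, norm_mul]; simp only [Complex.norm_ofNat]
      rw [div_le_div_iff₀ (by positivity) hx]; linarith
    unfold ph
    rw [norm_div]
    calc _ ≤ (3/w.re + 1/w.re)/w.re := by
          gcongr
          exact (norm_sub_le _ _).trans (by gcongr)
      _ = 4/w.re^2 := by field_simp; norm_num
      _ = 8/(w.re^2+w.re^2) := by field_simp; norm_num
      _ ≤ (400*Real.exp 10)/(1+w.re^2) := by
          gcongr
          · nlinarith [Real.add_one_le_exp 10]
          · nlinarith

section
open MeasureTheory Set

lemma LL_sub_hasSum (z : ℂ) (hz : 0 < z.re) :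
    HasSum (fun m : ℕ => z * ph ((m+1)*z)) (LL z - ((Real.pi^2/15 : ℝ) : ℂ)/z) := by
  have hz0 : z ≠ 0 := by rintro rfl; simp at hz
  have h2 := (hasSum_nat_add_iff' 1).mpr hasSum_zeta_two
  simp only [Finset.sum_range_one, Nat.cast_zero, ne_eq, OfNat.ofNat_ne_zero, not_false_eq_true, zero_pow, div_zero, sub_zero] at h2
  have h3 := (Complex.hasSum_ofReal.mpr h2).mul_left (2/(5*z))
  have h := (LL_hasSum z hz).sub h3
  have e1 : (fun m : ℕ => z * ph ((m+1)*z)) = fun m : ℕ => gg ((m+1)*z)/(m+1) - 2/(5*z) * (((1 / ((m+1 : ℕ):ℝ)^2 : ℝ)) : ℂ) := by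
    ext m
    have : (m:ℂ)+1 ≠ 0 := by exact_mod_cast Nat.succ_ne_zero m
    unfold ph
    push_cast
    field_simp
  have e2 : LL z - ((Real.pi^2/15 : ℝ) : ℂ)/z = LL z - 2/(5*z) * ((Real.pi^2/6 : ℝ) : ℂ) := by
    push_cast; field_simp; ring
  rw [e1, e2]
  exact h

lemma integral_floor (a : ℕ → ℂ) (ha : Summable fun m => ‖a m‖) :
    ∫ x in Ioi (0:ℝ), a ⌊x⌋₊ = ∑' m, a m := by
  have hU : (⋃ m : ℕ, Ico (m:ℝ) (m+1)) = Ici (0:ℝ) := by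
    ext x
    simp only [mem_iUnion, mem_Ico, mem_Ici]
    constructor
    · rintro ⟨m, h, _⟩
      exact le_trans (Nat.cast_nonneg m) h
    · intro h
      exact ⟨⌊x⌋₊, Nat.floor_le h, Nat.lt_floor_add_one x⟩
  have hfl : ∀ m : ℕ, ∀ x ∈ Ico (m:ℝ) (m+1), ⌊x⌋₊ = m := by
    intro m x hx
    exact (Nat.floor_eq_iff (le_trans (Nat.cast_nonneg m) hx.1)).mpr hx
  have hi : ∀ m : ℕ, IntegrableOn (fun x : ℝ => a ⌊x⌋₊) (Ico (m:ℝ) (m+1)) := by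
    intro m
    have : IntegrableOn (fun _ : ℝ => a m) (Ico (m:ℝ) (m+1)) := by
      exact integrableOn_const (by simp) (by simp)
    refine this.congr_fun (fun x hx => ?_) measurableSet_Ico
    simp only [hfl m x hx]
  have hint : IntegrableOn (fun x : ℝ => a ⌊x⌋₊) (⋃ m : ℕ, Ico (m:ℝ) (m+1)) := by
    apply integrableOn_iUnion_of_summable_integral_norm hi
    refine ha.congr fun m => ?_
    rw [setIntegral_congr_fun measurableSet_Ico (g := fun _ => ‖a m‖) (fun x hx => by simp only [hfl m x hx])]
    simp
  have h := hasSum_integral_iUnion (fun m : ℕ => measurableSet_Ico) (by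
    intro i j hij
    refine Set.disjoint_left.mpr fun x hx hx' => hij ?_
    rw [← hfl i x hx, ← hfl j x hx']) hint
  rw [hU, integral_Ici_eq_integral_Ioi] at h
  rw [← h.tsum_eq]
  refine tsum_congr fun m => ?_
  rw [setIntegral_congr_fun measurableSet_Ico (g := fun _ => a m) (fun x hx => by simp only [hfl m x hx])]
  simp

lemma integral_floor_mul (a : ℕ → ℂ) (ha : Summable fun m => ‖a m‖) (t : ℝ) (ht : 0 < t) :
    ∫ x in Ioi (0:ℝ), a ⌊x/t⌋₊ = t * ∑' m, a m := by
  rw [← integral_floor a ha]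
  have := integral_comp_mul_left_Ioi (fun x : ℝ => a ⌊x⌋₊) 0 (inv_pos.mpr ht)
  simp only [mul_zero, inv_inv] at this
  simp_rw [div_eq_inv_mul]
  rw [this]; simp

lemma ph_real (x : ℝ) : ph x = (phr x : ℂ) := by
  unfold ph phr
  rw [gg_real]; push_cast; rfl

lemma phr_integrable : IntegrableOn phr (Ioi 0) := by
  obtain ⟨K, hK, hb⟩ := ph_bound
  refine Integrable.mono' (g := fun x : ℝ => K * (1+x^2)⁻¹) (integrable_inv_one_add_sq.const_mul K).integrableOn ?_ ?_
  · apply Measurable.aestronglyMeasurable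
    unfold phr
    fun_prop
  · refine (ae_restrict_iff' measurableSet_Ioi).mpr (ae_of_all _ ?_)
    intro x hx
    have := hb x (by simpa using hx) (by simpa using le_of_lt hx)
    rw [ph_real, Complex.norm_real] at this
    simpa [div_eq_mul_inv] using this

lemma ph_cont (x : ℝ) (hx : 0 < x) : ContinuousAt ph x := by
  unfold ph gg
  have h1 : (1 : ℂ) - Complex.exp (-(5*(x:ℂ))) ≠ 0 := by
    have : Real.exp (-(5*x)) < 1 := by rw [Real.exp_lt_one_iff]; linarith
    have h : ((1 - Real.exp (-(5*x)) : ℝ) : ℂ) ≠ 0 := by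
      rw [Complex.ofReal_ne_zero]; linarith
    push_cast at h; exact h
  have h2 : (x:ℂ) ≠ 0 := Complex.ofReal_ne_zero.mpr hx.ne'
  have h3 : 5*(x:ℂ) ≠ 0 := mul_ne_zero (by norm_num) h2
  fun_prop (disch := assumption)

lemma LL_asymp (t y : ℕ → ℝ) (ht : ∀ j, 0 < t j) (ht0 : Tendsto t atTop (𝓝 0)) (hy : Tendsto y atTop (𝓝 0)) :
    Tendsto (fun j => LL (t j * (1 + y j * Complex.I)) - ((Real.pi^2/15 : ℝ) : ℂ)/(t j * (1 + y j * Complex.I)))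
      atTop (𝓝 ((-Real.log (2 * Real.sin (Real.pi / 5)) : ℝ) : ℂ)) := by
  obtain ⟨K, hK, hb⟩ := ph_bound
  set z : ℕ → ℂ := fun j => t j * (1 + y j * Complex.I) with hz
  have hzre : ∀ j, (z j).re = t j := by intro j; simp [hz]
  have hzim : ∀ j, (z j).im = t j * y j := by intro j; simp [hz]
  set F : ℕ → ℝ → ℂ := fun j x => ph (((⌊x / t j⌋₊ : ℕ) + 1) * z j) with hF
  have hwre : ∀ j x, (((⌊x / t j⌋₊ : ℕ) + 1) * z j).re = (⌊x / t j⌋₊ + 1) * t j := by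
    intro j x; rw [← hzre]; simp
  have hwim : ∀ j x, (((⌊x / t j⌋₊ : ℕ) + 1) * z j).im = (⌊x / t j⌋₊ + 1) * t j * y j := by
    intro j x; rw [mul_assoc, ← hzim]; simp
  have hsum : ∀ j, LL (z j) - ((Real.pi^2/15 : ℝ) : ℂ)/(z j) = (1 + y j * Complex.I) * ∫ x in Ioi (0:ℝ), F j x := by
    intro j
    have hs := LL_sub_hasSum (z j) (by rw [hzre]; exact ht j)
    have hz0 : z j ≠ 0 := by
      intro h; have := hzre j; rw [h] at this; simp at this; exact (ht j).ne this
    have hs' : Summable (fun m : ℕ => ph ((m+1) * z j)) := (summable_mul_left_iff hz0).mp hs.summable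
    have := integral_floor_mul (fun m : ℕ => ph ((m+1) * z j)) hs'.norm (t j) (ht j)
    rw [← hs.tsum_eq, tsum_mul_left]
    simp only [hF]
    rw [this]
    simp only [hz]; ring
  refine Tendsto.congr (fun j => (hsum j).symm) ?_
  have hlim : Tendsto (fun j => ∫ x in Ioi (0:ℝ), F j x) atTop (𝓝 (∫ x in Ioi (0:ℝ), (phr x : ℂ))) := by
    apply tendsto_integral_filter_of_dominated_convergence (fun x : ℝ => K * (1+x^2)⁻¹)
    · refine Eventually.of_forall fun j => ?_
      apply Measurable.aestronglyMeasurable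
      have : Measurable (fun m : ℕ => ph ((m+1) * z j)) := measurable_from_nat
      exact this.comp (Nat.measurable_floor.comp (measurable_id.div_const _))
    · have : ∀ᶠ j in atTop, |y j| ≤ 1 := by
        have := hy.abs
        rw [abs_zero] at this
        filter_upwards [this.eventually (gt_mem_nhds one_pos)] with j hj using hj.le
      filter_upwards [this] with j hj
      refine (ae_restrict_iff' measurableSet_Ioi).mpr (ae_of_all _ ?_)
      intro x hx
      have hx : 0 < x := hx
      have hpos : 0 < ((⌊x / t j⌋₊ : ℝ) + 1) * t j := mul_pos (by positivity) (ht j)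
      have hge : x ≤ ((⌊x / t j⌋₊ : ℝ) + 1) * t j := by
        rw [← div_le_iff₀ (ht j)]; exact (Nat.lt_floor_add_one _).le
      refine (hb _ (by rw [hwre]; exact hpos) (by
        rw [hwre, hwim, abs_mul, abs_of_pos hpos]
        nlinarith)).trans ?_
      rw [hwre, div_eq_mul_inv]
      gcongr
    · exact (integrable_inv_one_add_sq.const_mul K).integrableOn
    · refine (ae_restrict_iff' measurableSet_Ioi).mpr (ae_of_all _ ?_)
      intro x hx
      have hx : 0 < x := hx
      rw [← ph_real]
      have hr : Tendsto (fun j => ((⌊x / t j⌋₊ : ℝ) + 1) * t j) atTop (𝓝 x) := by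
        refine tendsto_of_tendsto_of_tendsto_of_le_of_le (g := fun _ => x) (h := fun j => x + t j) tendsto_const_nhds ?_ ?_ ?_
        · simpa using ht0.const_add x
        · intro j
          simp only
          rw [← div_le_iff₀ (ht j)]; exact (Nat.lt_floor_add_one _).le
        · intro j
          simp only
          have := Nat.floor_le (div_pos hx (ht j)).le
          rw [le_div_iff₀ (ht j)] at this
          linarith
      have hw : Tendsto (fun j => (((⌊x / t j⌋₊ : ℕ) + 1) * z j)) atTop (𝓝 (x:ℂ)) := by
        have h1 : Tendsto (fun j => ((((⌊x / t j⌋₊ : ℝ) + 1) * t j : ℝ) : ℂ)) atTop (𝓝 (x:ℂ)) :=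
          (Complex.continuous_ofReal.tendsto x).comp hr
        have h2 : Tendsto (fun j => (1 + (y j : ℂ) * Complex.I)) atTop (𝓝 1) := by
          have := (((Complex.continuous_ofReal.tendsto 0).comp hy).mul_const Complex.I).const_add 1
          simpa using this
        have h3 := h1.mul h2
        rw [mul_one] at h3
        refine h3.congr fun j => ?_
        simp only [hz]; push_cast; ring
      exact (ph_cont x hx).tendsto.comp hw
  have h2 : Tendsto (fun j => (1 + (y j : ℂ) * Complex.I)) atTop (𝓝 1) := by
    have := (((Complex.continuous_ofReal.tendsto 0).comp hy).mul_const Complex.I).const_add 1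
    simpa using this
  have := h2.mul hlim
  rw [one_mul, integral_complex_ofReal, phr_integral phr_integrable] at this
  exact this

end

section
open MeasureTheory Set

lemma int_exp_zero (m : ℤ) (hm : m ≠ 0) :
    ∫ θ in Ioc (-Real.pi) Real.pi, Complex.exp (m * (θ * Complex.I)) = 0 := by
  rw [← intervalIntegral.integral_of_le (by linarith [Real.pi_pos])]
  have hc : (m : ℂ) * Complex.I ≠ 0 := mul_ne_zero (by exact_mod_cast hm) Complex.I_ne_zero
  have := integral_exp_mul_complex (a := -Real.pi) (b := Real.pi) hc
  have e : ∀ θ : ℝ, Complex.exp (m * (θ * Complex.I)) = Complex.exp (m * Complex.I * θ) := by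
    intro θ; congr 1; ring
  simp_rw [e]
  rw [this]
  have h2 : Complex.exp (m * Complex.I * Real.pi) = Complex.exp (m * Complex.I * (-Real.pi : ℝ)) := by
    rw [Complex.exp_eq_exp_iff_exists_int]
    exact ⟨m, by push_cast; ring⟩
  rw [h2, sub_self, zero_div]

lemma coeff_int (t : ℝ) (ht : 0 < t) (n : ℕ) :
    ∫ θ in Ioc (-Real.pi) Real.pi, Complex.exp (LL (t + θ * Complex.I) + n * (t + θ * Complex.I)) = 2 * Real.pi * (p51 n : ℂ) := by
  set F : ℕ → ℝ → ℂ := fun k θ => (p51 k : ℂ) * Complex.exp (-(t + θ * Complex.I))^k * Complex.exp (n * (t + θ * Complex.I)) with hF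
  have hFe : ∀ k θ, F k θ = ((p51 k : ℂ) * Complex.exp (((n:ℤ) - (k:ℤ) : ℤ) * t)) * Complex.exp (((n:ℤ) - (k:ℤ) : ℤ) * (θ * Complex.I)) := by
    intro k θ
    simp only [hF]
    rw [← Complex.exp_nat_mul, mul_assoc, mul_assoc, ← Complex.exp_add, ← Complex.exp_add]
    congr 2; push_cast; ring
  have hz : ∀ θ : ℝ, ((t:ℂ) + θ * Complex.I).re = t := by intro θ; simp
  have hint : ∀ k, Integrable (F k) (volume.restrict (Ioc (-Real.pi) Real.pi)) := by
    intro k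
    apply Continuous.integrableOn_Ioc
    simp only [hF]; fun_prop
  have hn : ∀ k θ, ‖F k θ‖ = (p51 k : ℝ) * Real.exp (-t)^k * Real.exp (n*t) := by
    intro k θ
    simp only [hF]
    rw [norm_mul, norm_mul, norm_pow, Complex.norm_exp, Complex.norm_exp, Complex.neg_re, hz]
    simp
  have h := hasSum_integral_of_summable_integral_norm hint (by
    simp_rw [hn]
    simp only [integral_const]
    apply Summable.const_smul
    apply Summable.mul_right
    have := (p51_gen t (by simpa using ht)).1
    simpa using this)
  have h1 : ∀ θ : ℝ, ∑' k, F k θ = Complex.exp (LL (t + θ * Complex.I) + n * (t + θ * Complex.I)) := by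
    intro θ
    have := (p51_gen (t + θ * Complex.I) (by rw [hz]; exact ht)).2.mul_right (Complex.exp (n * (t + θ * Complex.I)))
    rw [Complex.exp_add]
    exact this.tsum_eq
  simp_rw [h1] at h
  rw [← h.tsum_eq, tsum_eq_single n]
  · simp_rw [hFe]
    simp
    rw [max_eq_left (by linarith [Real.pi_pos])]
    left; push_cast; ring
  · intro k hk
    simp_rw [hFe]
    rw [integral_const_mul, int_exp_zero _ (by omega), mul_zero]

lemma meas_expLL (t : ℝ) (ht : 0 < t) : Measurable (fun θ : ℝ => Complex.exp (LL (t + θ * Complex.I))) := by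
  have : ∀ N : ℕ, Measurable (fun θ : ℝ => ∑ k ∈ Finset.range N, (p51 k : ℂ) * Complex.exp (-(t + θ * Complex.I))^k) := by
    intro N
    apply Continuous.measurable; fun_prop
  refine measurable_of_tendsto_metrizable this ?_
  rw [tendsto_pi_nhds]
  intro θ
  exact (p51_gen (t + θ * Complex.I) (by simpa using ht)).2.tendsto_sum_nat

lemma dom_bound (c B : ℝ) (hc : 0 < c) (hB : 0 < B) : ∃ K > 0, ∀ N u : ℝ, 1 ≤ N → u^2 ≤ B * N^3 →
    Real.exp (-(c * min (u^2) N)) ≤ K * (1+u^2)⁻¹ := by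
  refine ⟨1 + 1/c + 12*B/c^3, by positivity, ?_⟩
  intro N u hN hu
  have hk : 0 < 12*B/c^3 := by positivity
  have hk2 : 0 < 1/c := by positivity
  rw [← div_eq_mul_inv, Real.exp_neg, ← one_div]
  rcases le_total (u^2) N with h | h
  · rw [min_eq_left h, div_le_div_iff₀ (Real.exp_pos _) (by positivity)]
    have h1 := Real.add_one_le_exp (c*u^2)
    have h2 : 1 + u^2 ≤ (1+1/c)*(c*u^2+1) := by
      have : (1+1/c)*(c*u^2+1) = 1 + u^2 + (c*u^2 + 1/c) := by field_simp; ring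
      rw [this]
      have : 0 ≤ c*u^2 := by positivity
      linarith
    calc 1 * (1+u^2) ≤ (1+1/c)*(c*u^2+1) := by linarith
      _ ≤ (1+1/c + 12*B/c^3) * Real.exp (c*u^2) := by
        exact mul_le_mul (by linarith) h1 (by positivity) (by positivity)
  · rw [min_eq_right h, div_le_div_iff₀ (Real.exp_pos _) (by positivity)]
    have h1 := Real.pow_div_factorial_le_exp (c*N) (by positivity) 3
    norm_num [Nat.factorial] at h1
    calc 1 * (1+u^2) ≤ 2*(B*N^3) := by nlinarith
      _ = 12*B/c^3 * ((c*N)^3/6) := by field_simp; norm_num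
      _ ≤ _ := by gcongr; linarith

end

section
open MeasureTheory Set

def AA : ℝ := Real.pi^2/15
def Ns (j : ℕ) : ℝ := Real.sqrt (AA * (j+1))
def ts (j : ℕ) : ℝ := AA / Ns j
def ss (j : ℕ) : ℝ := ts j / Real.sqrt (Ns j)

lemma AA_pos : 0 < AA := by unfold AA; positivity
lemma Ns_pos (j : ℕ) : 0 < Ns j := Real.sqrt_pos.mpr (mul_pos AA_pos (by positivity))
lemma ts_pos (j : ℕ) : 0 < ts j := div_pos AA_pos (Ns_pos j)
lemma sN_pos (j : ℕ) : 0 < Real.sqrt (Ns j) := Real.sqrt_pos.mpr (Ns_pos j)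
lemma ss_pos (j : ℕ) : 0 < ss j := div_pos (ts_pos j) (sN_pos j)
lemma Ns_sq (j : ℕ) : Ns j ^ 2 = AA * (j+1) := Real.sq_sqrt (mul_pos AA_pos (by positivity)).le
lemma n_ts (j : ℕ) : ((j:ℝ)+1) * ts j = Ns j := by
  unfold ts
  have := Ns_sq j
  have h := (Ns_pos j).ne'
  field_simp
  linarith
lemma Ns_top : Tendsto Ns atTop atTop := by
  unfold Ns
  apply Real.tendsto_sqrt_atTop.comp
  apply Tendsto.const_mul_atTop AA_pos
  exact tendsto_atTop_add_const_right _ _ tendsto_natCast_atTop_atTop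
lemma ts_zero : Tendsto ts atTop (𝓝 0) := Ns_top.const_div_atTop AA
lemma sNi_zero : Tendsto (fun j => (Real.sqrt (Ns j))⁻¹) atTop (𝓝 0) :=
  tendsto_inv_atTop_zero.comp (Real.tendsto_sqrt_atTop.comp Ns_top)
lemma ss_zero : Tendsto ss atTop (𝓝 0) := by
  have := ts_zero.mul sNi_zero
  rw [mul_zero] at this
  exact this

def GG (j : ℕ) (θ : ℝ) : ℂ := Complex.exp (LL (ts j + θ * Complex.I) + ((j+1:ℕ):ℂ) * (ts j + θ * Complex.I) - (2 * Ns j : ℝ))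

def HH (j : ℕ) (u : ℝ) : ℂ := (Ioc (-Real.pi) Real.pi).indicator (GG j) (u * ss j)

lemma GG_meas (j : ℕ) : Measurable (GG j) := by
  have h := meas_expLL (ts j) (ts_pos j)
  have : GG j = fun θ : ℝ => Complex.exp (LL (ts j + θ * Complex.I)) * Complex.exp (((j+1:ℕ):ℂ) * (ts j + θ * Complex.I) - (2 * Ns j : ℝ)) := by
    ext θ; unfold GG; rw [← Complex.exp_add]; congr 1; ring
  rw [this]
  apply h.mul
  apply Continuous.measurable; fun_prop

lemma HH_integral (j : ℕ) : ∫ u, HH j u = ((2 * Real.pi * p51 (j+1) * Real.exp (-(2*Ns j)) / ss j : ℝ) : ℂ) := by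
  unfold HH
  rw [Measure.integral_comp_mul_right, integral_indicator measurableSet_Ioc]
  have : ∀ θ : ℝ, GG j θ = Complex.exp (LL (ts j + θ * Complex.I) + ((j+1:ℕ):ℂ) * (ts j + θ * Complex.I)) * Complex.exp (-(2 * Ns j : ℝ)) := by
    intro θ; unfold GG; rw [sub_eq_add_neg, Complex.exp_add _ (-((2 * Ns j : ℝ):ℂ))]
  simp_rw [this]
  rw [integral_mul_const, coeff_int (ts j) (ts_pos j), abs_of_pos (inv_pos.mpr (ss_pos j))]
  rw [Complex.real_smul]
  push_cast
  field_simp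

lemma z_eq (j : ℕ) (u : ℝ) : (ts j : ℂ) + ((u * ss j : ℝ) : ℂ) * Complex.I = ts j * (1 + ((u * (Real.sqrt (Ns j))⁻¹ : ℝ) : ℂ) * Complex.I) := by
  unfold ss; push_cast; ring

lemma GG_eq (j : ℕ) (u : ℝ) : GG j (u * ss j) =
    Complex.exp ((LL (ts j * (1 + ((u * (Real.sqrt (Ns j))⁻¹ : ℝ) : ℂ) * Complex.I)) - ((Real.pi^2/15 : ℝ) : ℂ) / (ts j * (1 + ((u * (Real.sqrt (Ns j))⁻¹ : ℝ) : ℂ) * Complex.I)))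
      - (u:ℂ)^2 / (1 + ((u * (Real.sqrt (Ns j))⁻¹ : ℝ) : ℂ) * Complex.I)) := by
  unfold GG
  rw [z_eq]
  congr 1
  set y : ℝ := u * (Real.sqrt (Ns j))⁻¹ with hy
  have hu : u^2 = Ns j * y^2 := by
    rw [hy, mul_pow, inv_pow, Real.sq_sqrt (Ns_pos j).le]
    have := (Ns_pos j).ne'
    field_simp
  have hd : (1 + (y:ℂ) * Complex.I) ≠ 0 := by
    intro h
    have := congrArg Complex.re h
    simp at this
  have hA : ((Real.pi^2/15 : ℝ) : ℂ) = (Ns j : ℂ) * ts j := by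
    have : Real.pi^2/15 = Ns j * ts j := by
      unfold ts; rw [mul_div_cancel₀ _ (Ns_pos j).ne']; rfl
    rw [this]; push_cast; rfl
  have hn : ((j+1:ℕ):ℂ) * ts j = Ns j := by
    rw [← n_ts j]; push_cast; rfl
  have hu' : (u:ℂ)^2 = Ns j * (y:ℂ)^2 := by exact_mod_cast hu
  have ht : (ts j : ℂ) ≠ 0 := Complex.ofReal_ne_zero.mpr (ts_pos j).ne'
  rw [hA, hu', ← mul_assoc, hn]
  have e : (Ns j : ℂ) * ts j / (ts j * (1 + y * Complex.I)) = Ns j / (1 + y * Complex.I) := by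
    field_simp
  rw [e]
  have e2 : (Ns j : ℂ) * (1 + y * Complex.I) - (2 * Ns j : ℝ) = - (Ns j / (1 + y * Complex.I)) - Ns j * (y:ℂ)^2 / (1 + y * Complex.I) := by
    field_simp
    push_cast
    ring_nf
    rw [Complex.I_sq]; ring
  linear_combination e2

lemma y_zero (u : ℝ) : Tendsto (fun j => u * (Real.sqrt (Ns j))⁻¹) atTop (𝓝 0) := by
  simpa using sNi_zero.const_mul u

lemma HH_lim (u : ℝ) : Tendsto (fun j => HH j u) atTop (𝓝 (((2 * Real.sin (Real.pi/5))⁻¹ * Real.exp (-u^2) : ℝ) : ℂ)) := by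
  have h1 := LL_asymp ts (fun j => u * (Real.sqrt (Ns j))⁻¹) ts_pos ts_zero (y_zero u)
  have h2 : Tendsto (fun j => (1 + ((u * (Real.sqrt (Ns j))⁻¹ : ℝ) : ℂ) * Complex.I)) atTop (𝓝 1) := by
    have := (((Complex.continuous_ofReal.tendsto 0).comp (y_zero u)).mul_const Complex.I).const_add 1
    simpa using this
  have h3 := h1.sub ((tendsto_const_nhds (x := (u:ℂ)^2)).div h2 one_ne_zero)
  have h4 := (Complex.continuous_exp.tendsto _).comp h3
  have e : Complex.exp (((-Real.log (2 * Real.sin (Real.pi / 5)) : ℝ) : ℂ) - (u:ℂ)^2/1) = (((2 * Real.sin (Real.pi/5))⁻¹ * Real.exp (-u^2) : ℝ) : ℂ) := by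
    have : ((-Real.log (2 * Real.sin (Real.pi / 5)) : ℝ) : ℂ) - (u:ℂ)^2/1 = ((-Real.log (2 * Real.sin (Real.pi / 5)) + -u^2 : ℝ) : ℂ) := by
      push_cast; ring
    rw [this, ← Complex.ofReal_exp, Real.exp_add, Real.exp_neg, Real.exp_log (mul_pos two_pos sin5_pos)]
  rw [e] at h4
  refine h4.congr' ?_
  have hs : Tendsto (fun j => u * ss j) atTop (𝓝 0) := by simpa using ss_zero.const_mul u
  have hpi := Real.pi_pos
  filter_upwards [hs.eventually (Ioo_mem_nhds (show -Real.pi < 0 by linarith) hpi)] with j hj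
  unfold HH
  rw [indicator_of_mem (show u * ss j ∈ Ioc (-Real.pi) Real.pi from ⟨hj.1, hj.2.le⟩), GG_eq]
  rfl

lemma HH_dom : ∃ K : ℝ, ∀ᶠ j in atTop, ∀ u, ‖HH j u‖ ≤ K * (1+u^2)⁻¹ := by
  obtain ⟨c, hc, hg⟩ := gg_bound
  obtain ⟨K, hK, hd⟩ := dom_bound (c/AA) (Real.pi^2/AA^2) (div_pos hc AA_pos) (div_pos (by positivity) (pow_pos AA_pos 2))
  have h1 := LL_asymp ts (fun j => 0) ts_pos ts_zero tendsto_const_nhds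
  set L : ℝ := -Real.log (2 * Real.sin (Real.pi / 5))
  have h2 : Tendsto (fun j => (LL (ts j)).re - Ns j) atTop (𝓝 L) := by
    have := (Complex.continuous_re.tendsto _).comp h1
    rw [Complex.ofReal_re] at this
    refine this.congr fun j => ?_
    have e : ((Real.pi^2/15 : ℝ) : ℂ) / ts j = (Ns j : ℝ) := by
      rw [← Complex.ofReal_div]; congr 1
      unfold ts
      have := AA_pos.ne'; have := (Ns_pos j).ne'
      change AA / _ = _
      field_simp
    simp only [Function.comp, Complex.ofReal_zero, zero_mul, add_zero, mul_one]
    rw [e]; simp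
  refine ⟨Real.exp (L+1) * K, ?_⟩
  filter_upwards [h2.eventually (gt_mem_nhds (show L < L+1 by linarith)), Ns_top.eventually_ge_atTop 1,
    ts_zero.eventually (gt_mem_nhds one_pos)] with j hj hN ht
  intro u
  unfold HH
  by_cases hu : u * ss j ∈ Ioc (-Real.pi) Real.pi
  · rw [indicator_of_mem hu]
    have habs : |u * ss j| ≤ Real.pi := abs_le.mpr ⟨hu.1.le, hu.2⟩
    have k1 := hg (ts j) (u * ss j) (ts_pos j) ht.le habs
    have k2 := LL_re_le (ts j) (u * ss j) (ts_pos j)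
    have hsN : Real.sqrt (Ns j) ^ 2 = Ns j := Real.sq_sqrt (Ns_pos j).le
    have hN0 := Ns_pos j
    have hsp := sN_pos j
    have htp := ts_pos j
    have hA := AA_pos
    have e1 : c * (min ((u * ss j/ts j)^2) 1 / ts j) = c / AA * min (u^2) (Ns j) := by
      have a1 : (u * ss j/ts j)^2 = u^2 / Ns j := by
        unfold ss
        rw [show u * (ts j / Real.sqrt (Ns j)) / ts j = u / Real.sqrt (Ns j) by field_simp, div_pow, hsN]
      have a2 : min (u^2/Ns j) 1 = min (u^2) (Ns j) / Ns j := by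
        rw [← min_div_div_right hN0.le, div_self hN0.ne']
      rw [a1, a2]
      unfold ts
      field_simp
    rw [e1] at k1
    have hu2 : u^2 ≤ Real.pi^2/AA^2 * Ns j^3 := by
      have b1 : (u * ss j)^2 ≤ Real.pi^2 := sq_le_sq' hu.1.le hu.2
      have b2 : (u * ss j)^2 = u^2 * (AA^2 / Ns j^3) := by
        unfold ss ts
        rw [mul_pow, div_pow, hsN, div_pow]
        field_simp
      rw [b2] at b1
      have : u^2 = (u^2 * (AA^2 / Ns j^3)) * (Ns j^3/AA^2) := by field_simp
      rw [this]
      calc _ ≤ Real.pi^2 * (Ns j^3/AA^2) := by gcongr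
        _ = _ := by ring
    have k3 := hd (Ns j) u hN hu2
    unfold GG
    rw [Complex.norm_exp]
    have hre : (LL (ts j + ((u * ss j : ℝ):ℂ) * Complex.I) + ((j+1:ℕ):ℂ) * (ts j + ((u * ss j : ℝ):ℂ) * Complex.I) - ((2 * Ns j : ℝ):ℂ)).re
       = (LL (ts j + ((u * ss j : ℝ):ℂ) * Complex.I)).re + ((j:ℝ)+1) * ts j - 2 * Ns j := by
      simp only [Complex.sub_re, Complex.add_re, Complex.mul_re, Complex.natCast_re, Complex.natCast_im, Complex.ofReal_re, Complex.ofReal_im, Complex.I_re, Complex.I_im]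
      push_cast; ring
    rw [hre, n_ts]
    calc _ ≤ Real.exp ((L+1) + (-(c / AA * min (u^2) (Ns j)))) := by
          apply Real.exp_le_exp.mpr; linarith
      _ = Real.exp (L+1) * Real.exp (-(c / AA * min (u^2) (Ns j))) := Real.exp_add _ _
      _ ≤ Real.exp (L+1) * (K * (1+u^2)⁻¹) := by gcongr
      _ = _ := by ring
  · rw [indicator_of_notMem hu, norm_zero]; positivity

lemma main_lim : Tendsto (fun j : ℕ => 2 * Real.pi * p51 (j+1) * Real.exp (-(2*Ns j)) / ss j) atTop
    (𝓝 ((2 * Real.sin (Real.pi/5))⁻¹ * Real.sqrt Real.pi)) := by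
  obtain ⟨K, hK⟩ := HH_dom
  have : Tendsto (fun j => ∫ u, HH j u) atTop (𝓝 (∫ u : ℝ, (((2 * Real.sin (Real.pi/5))⁻¹ * Real.exp (-u^2) : ℝ) : ℂ))) := by
    apply tendsto_integral_filter_of_dominated_convergence (fun x : ℝ => K * (1+x^2)⁻¹)
    · refine Eventually.of_forall fun j => ?_
      apply Measurable.aestronglyMeasurable
      exact ((GG_meas j).indicator measurableSet_Ioc).comp (measurable_id.mul_const _)
    · filter_upwards [hK] with j hj
      exact ae_of_all _ hj
    · exact integrable_inv_one_add_sq.const_mul K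
    · exact ae_of_all _ HH_lim
  rw [integral_complex_ofReal, integral_const_mul] at this
  have hgau := integral_gaussian 1
  simp only [neg_mul, one_mul, div_one] at hgau
  rw [hgau] at this
  simp_rw [HH_integral] at this
  have h := (Complex.continuous_re.tendsto _).comp this
  rw [Complex.ofReal_re] at h
  exact h

end

lemma ss_eq (j : ℕ) : ss j = AA^((1:ℝ)/4) * ((j:ℝ)+1)^(-(3:ℝ)/4) := by
  have hA := AA_pos
  have hm : (0:ℝ) < (j:ℝ)+1 := by positivity
  unfold ss ts Ns
  rw [Real.sqrt_eq_rpow, Real.sqrt_eq_rpow, ← Real.rpow_mul (by positivity), div_div, ← Real.rpow_add (by positivity),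
    Real.mul_rpow hA.le hm.le, ← div_div, div_eq_mul_inv, ← Real.rpow_neg hm.le, ← Real.rpow_one_sub' hA.le (by norm_num)]
  norm_num

lemma AA_quarter : AA^((1:ℝ)/4) * ((3:ℝ)^((1:ℝ)/4) * (5:ℝ)^((1:ℝ)/4)) = Real.sqrt Real.pi := by
  have hpi := Real.pi_pos
  rw [← Real.mul_rpow (by norm_num) (by norm_num), ← Real.mul_rpow AA_pos.le (by norm_num), Real.sqrt_eq_rpow]
  have : AA * (3*5) = Real.pi^(2:ℝ) := by
    unfold AA; rw [Real.rpow_two]; ring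
  rw [this, ← Real.rpow_mul hpi.le]; norm_num

lemma Ns_eq (j : ℕ) : 2 * Ns j = 2 * Real.pi / Real.sqrt 15 * Real.sqrt ((j:ℝ)+1) := by
  unfold Ns AA
  rw [Real.sqrt_mul (by positivity), Real.sqrt_div (by positivity), Real.sqrt_sq Real.pi_pos.le]
  ring

lemma rat_lim : Tendsto (fun j : ℕ => (((j:ℝ)+1) / ((j:ℝ)+1 - 1/60))^(-(3:ℝ)/4)) atTop (𝓝 1) := by
  have h : Tendsto (fun j : ℕ => ((j:ℝ)+1) / ((j:ℝ)+1 - 1/60)) atTop (𝓝 1) := by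
    have h1 : Tendsto (fun j : ℕ => 1 + (1/60) / ((j:ℝ)+1 - 1/60)) atTop (𝓝 (1+0)) := by
      apply Tendsto.const_add
      apply Tendsto.const_div_atTop
      have : Tendsto (fun j : ℕ => (j:ℝ) + (1 - 1/60)) atTop atTop :=
        tendsto_atTop_add_const_right _ _ tendsto_natCast_atTop_atTop
      refine this.congr fun j => by ring
    rw [add_zero] at h1
    refine h1.congr fun j => ?_
    have : (j:ℝ)+1 - 1/60 ≠ 0 := by
      have : (0:ℝ) ≤ j := Nat.cast_nonneg j
      linarith
    rw [eq_div_iff this, add_mul, div_mul_cancel₀ _ this]; ring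
  have := h.rpow_const (p := -(3:ℝ)/4) (Or.inl one_ne_zero)
  rwa [Real.one_rpow] at this

lemma exp_lim : Tendsto (fun j : ℕ => Real.exp (2 * Real.pi / Real.sqrt 15 * (Real.sqrt ((j:ℝ)+1) - Real.sqrt ((j:ℝ)+1 - 1/60)))) atTop (𝓝 1) := by
  have h : Tendsto (fun j : ℕ => Real.sqrt ((j:ℝ)+1) - Real.sqrt ((j:ℝ)+1 - 1/60)) atTop (𝓝 0) := by
    have ht : Tendsto (fun j : ℕ => (1:ℝ) / Real.sqrt ((j:ℝ)+1)) atTop (𝓝 0) := by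
      apply Tendsto.const_div_atTop
      exact Real.tendsto_sqrt_atTop.comp (tendsto_atTop_add_const_right _ _ tendsto_natCast_atTop_atTop)
    refine squeeze_zero (fun j => ?_) (fun j => ?_) ht
    · have := Real.sqrt_le_sqrt (show (j:ℝ)+1-1/60 ≤ (j:ℝ)+1 by linarith)
      linarith
    · have hj : (0:ℝ) ≤ j := Nat.cast_nonneg j
      have hp : 0 < Real.sqrt ((j:ℝ)+1) := Real.sqrt_pos.mpr (by linarith)
      rw [le_div_iff₀ hp]
      have h1 := Real.sq_sqrt (show 0 ≤ (j:ℝ)+1 by linarith)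
      have h2 := Real.sq_sqrt (show 0 ≤ (j:ℝ)+1-1/60 by linarith)
      have h3 := Real.sqrt_nonneg ((j:ℝ)+1-1/60)
      have h4 := Real.sqrt_le_sqrt (show (j:ℝ)+1-1/60 ≤ (j:ℝ)+1 by linarith)
      nlinarith
  have := (Real.continuous_exp.tendsto _).comp (h.const_mul (2 * Real.pi / Real.sqrt 15))
  rw [mul_zero, Real.exp_zero] at this
  exact this


/-- As `n → ∞`,
`p_{5,±1}(n) ∼ (csc(π/5)/(4·3^{1/4}·5^{1/4}))·(n − 1/60)^{−3/4}·exp((2π/√15)·√(n − 1/60))`. -/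
theorem p51_asymptotic :
    Tendsto (fun n : ℕ =>
      (p51 n : ℝ) /
        ((Real.sin (Real.pi / 5))⁻¹ / (4 * (3 : ℝ) ^ ((1 : ℝ) / 4) * (5 : ℝ) ^ ((1 : ℝ) / 4)) *
          ((n : ℝ) - 1 / 60) ^ (-(3 : ℝ) / 4) *
          Real.exp (2 * Real.pi / Real.sqrt 15 * Real.sqrt ((n : ℝ) - 1 / 60))))
      atTop (nhds 1) := by
  rw [← tendsto_add_atTop_iff_nat 1]
  have h := ((main_lim.mul_const (2 * Real.sin (Real.pi/5) / Real.sqrt Real.pi)).mul rat_lim).mul exp_lim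
  have hpi := Real.pi_pos
  have hs := sin5_pos
  have hsp : 0 < Real.sqrt Real.pi := Real.sqrt_pos.mpr hpi
  have e : (2 * Real.sin (Real.pi/5))⁻¹ * Real.sqrt Real.pi * (2 * Real.sin (Real.pi/5) / Real.sqrt Real.pi) * 1 * 1 = 1 := by
    field_simp
  rw [e] at h
  refine h.congr fun j => ?_
  have hj : (0:ℝ) ≤ j := Nat.cast_nonneg j
  have hm : (0:ℝ) < (j:ℝ)+1 := by linarith
  have hr : (0:ℝ) < (j:ℝ)+1-1/60 := by linarith
  rw [ss_eq, Ns_eq, mul_sub, Real.exp_sub, Real.exp_neg, Real.div_rpow hm.le hr.le]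
  push_cast
  have hq := AA_quarter
  have hsq : Real.pi = Real.sqrt Real.pi ^ 2 := (Real.sq_sqrt hpi.le).symm
  have hA : 0 < AA^((1:ℝ)/4) := Real.rpow_pos_of_pos AA_pos _
  have h3 : 0 < (3:ℝ)^((1:ℝ)/4) := Real.rpow_pos_of_pos (by norm_num) _
  have h5 : 0 < (5:ℝ)^((1:ℝ)/4) := Real.rpow_pos_of_pos (by norm_num) _
  have hM : 0 < ((j:ℝ)+1)^(-(3:ℝ)/4) := Real.rpow_pos_of_pos hm _
  have hR : 0 < ((j:ℝ)+1-1/60)^(-(3:ℝ)/4) := Real.rpow_pos_of_pos hr _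
  have hE := Real.exp_pos (2 * Real.pi / Real.sqrt 15 * Real.sqrt ((j:ℝ)+1))
  have hE2 := Real.exp_pos (2 * Real.pi / Real.sqrt 15 * Real.sqrt ((j:ℝ)+1-1/60))
  generalize Real.exp (2 * Real.pi / Real.sqrt 15 * Real.sqrt ((j:ℝ)+1)) = E at *
  generalize Real.exp (2 * Real.pi / Real.sqrt 15 * Real.sqrt ((j:ℝ)+1-1/60)) = E2 at *
  generalize ((j:ℝ)+1)^(-(3:ℝ)/4) = M at *
  generalize ((j:ℝ)+1-1/60)^(-(3:ℝ)/4) = R at *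
  generalize AA^((1:ℝ)/4) = a at *
  generalize (3:ℝ)^((1:ℝ)/4) = b at *
  generalize (5:ℝ)^((1:ℝ)/4) = d at *
  generalize Real.sin (Real.pi/5) = s at *
  generalize Real.sqrt Real.pi = q at hsq hq hsp ⊢
  rw [hsq, ← hq]
  field_simp
  ring
end
end
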